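/- arXiv:2208.02212 — 2 statements merged into one kernel-verified Lean document; each statement's English description precedes it below -/
import Mathlib

section
/- Let 0 ≤ s < n, let 𝓛 be an s-dimensional affine subspace of ℝ^n parametrized by an injective affine map h: ℝ^s → ℝ^n with image 𝓛, let U ⊆ ℝ^d be open and connected, and let f: U → ℝ^n be a real-analytic map with f(U) ⊆ 𝓛 such that for every open ball B ⊆ U the image f(B) is connected and not contained in any proper affine subspace of 𝓛. Then the following are equivalent: (1) there exists x ∈ U such that f(x) is not singular; (2) there exists y ∈ 𝓛 that is not singular; (3) for Lebesgue-almost every x ∈ U, f(x) is not singular; (4) for Lebesgue-almost every t ∈ ℝ^s, h(t) is not singular. -/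
open MeasureTheory Filter

/-- A vector `x ∈ ℝ^n` is singular. -/
def IsSingularVec {n : ℕ} (x : Fin n → ℝ) : Prop :=
  ∀ c : ℝ, 0 < c → ∃ Q₀ : ℝ, 0 < Q₀ ∧ ∀ Q : ℝ, Q₀ ≤ Q →
    ∃ q : Fin n → ℤ, q ≠ 0 ∧ ∃ q₀ : ℤ,
      |(∑ i, (q i : ℝ) * x i) + (q₀ : ℝ)| < c / Q ^ n ∧ ∀ i, |(q i : ℝ)| ≤ Q

/-- **Rolle's theorem, many points.** If `f` vanishes at `m + 1` points of an interval, then its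
derivative vanishes at `m` points of it. -/
lemma exists_finset_deriv_eq_zero {f : ℝ → ℝ} (hf : Continuous f) {I : Set ℝ}
    (hI : I.OrdConnected) {m : ℕ} {S : Finset ℝ} (hS : S.card = m + 1) (hSI : ↑S ⊆ I)
    (h0 : ∀ x ∈ S, f x = 0) :
    ∃ S' : Finset ℝ, S'.card = m ∧ ↑S' ⊆ I ∧ ∀ x ∈ S', deriv f x = 0 := by
  classical
  set x := S.orderEmbOfFin hS
  have hx : ∀ i, x i ∈ S := fun i => S.orderEmbOfFin_mem hS i
  have hlt : ∀ i : Fin m, x i.castSucc < x i.succ := fun i =>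
    x.strictMono Fin.castSucc_lt_succ
  have key : ∀ i : Fin m, ∃ c ∈ Set.Ioo (x i.castSucc) (x i.succ), deriv f c = 0 := fun i =>
    exists_deriv_eq_zero (hlt i) hf.continuousOn (by rw [h0 _ (hx _), h0 _ (hx _)])
  choose c hc hc0 using key
  have hmono : StrictMono c := fun i j hij =>
    ((hc i).2.trans_le (x.monotone (Fin.succ_le_castSucc_iff.2 hij))).trans (hc j).1
  refine ⟨Finset.univ.image c, ?_, ?_, ?_⟩
  · rw [Finset.card_image_of_injective _ hmono.injective]; simp
  · intro y hy
    obtain ⟨i, -, rfl⟩ := Finset.mem_image.1 (Finset.mem_coe.1 hy)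
    exact hI.out (hSI (hx i.castSucc)) (hSI (hx i.succ)) ⟨(hc i).1.le, (hc i).2.le⟩
  · intro y hy
    obtain ⟨i, -, rfl⟩ := Finset.mem_image.1 hy
    exact hc0 i

lemma exists_iteratedDeriv_eq_zero {I : Set ℝ} (hI : I.OrdConnected) (k : ℕ) :
    ∀ {f : ℝ → ℝ}, ContDiff ℝ (⊤ : ℕ∞) f → ∀ {S : Finset ℝ}, S.card = k + 1 → ↑S ⊆ I →
      (∀ x ∈ S, f x = 0) → ∃ ξ ∈ I, iteratedDeriv k f ξ = 0 := by
  induction k with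
  | zero =>
    intro f _ S hS hSI h0
    obtain ⟨x, hx⟩ : S.Nonempty := Finset.card_pos.1 (by omega)
    exact ⟨x, hSI hx, by simpa using h0 x hx⟩
  | succ k ih =>
    intro f hf S hS hSI h0
    obtain ⟨S', hS', hSI', h0'⟩ := exists_finset_deriv_eq_zero hf.continuous hI hS hSI h0
    obtain ⟨ξ, hξ, h⟩ := ih (contDiff_infty_iff_deriv.1 hf).2 hS' hSI' h0'
    exact ⟨ξ, hξ, by rw [iteratedDeriv_succ']; exact h⟩

lemma iteratedDeriv_polynomial_eval (p : Polynomial ℝ) (k : ℕ) :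
    iteratedDeriv k (fun x => p.eval x) = fun x => (Polynomial.derivative^[k] p).eval x := by
  induction k with
  | zero => simp
  | succ k ih =>
    rw [iteratedDeriv_succ, ih, Function.iterate_succ_apply']
    ext x
    simp

/-- **Mean value theorem for divided differences.** -/
lemma exists_iteratedDeriv_eq_sum_div {f : ℝ → ℝ} (hf : ContDiff ℝ (⊤ : ℕ∞) f) {I : Set ℝ}
    (hI : I.OrdConnected) {k : ℕ} {S : Finset ℝ} (hS : S.card = k + 1) (hSI : ↑S ⊆ I) :
    ∃ ξ ∈ I, iteratedDeriv k f ξ =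
      k.factorial * ∑ x ∈ S, f x / ∏ y ∈ S.erase x, (x - y) := by
  classical
  set p := Lagrange.interpolate S id f with hp
  have hinj : Set.InjOn (id : ℝ → ℝ) S := Function.injective_id.injOn
  have hpx : ∀ x ∈ S, p.eval x = f x := fun x hx =>
    Lagrange.eval_interpolate_at_node f hinj hx
  have hdeg : p.degree < S.card := Lagrange.degree_interpolate_lt f hinj
  have hpc : ContDiff ℝ (⊤ : ℕ∞) (fun x => p.eval x) :=
    p.contDiff_aeval (𝕜 := ℝ) (⊤ : ℕ∞)
  obtain ⟨ξ, hξ, h⟩ := exists_iteratedDeriv_eq_zero hI k (f := f - fun x => p.eval x)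
    (hf.sub hpc) hS hSI (fun x hx => by simp [hpx x hx])
  refine ⟨ξ, hξ, ?_⟩
  rw [iteratedDeriv_sub (hf.contDiffAt.of_le (by exact_mod_cast le_top))
    (hpc.contDiffAt.of_le (by exact_mod_cast le_top)), iteratedDeriv_polynomial_eval,
    sub_eq_zero] at h
  rw [h]
  beta_reduce
  rw [Lagrange.eval_iterate_derivative_eq_sum hinj hdeg (k := k) (by omega) ξ, hS]
  congr 1
  refine Finset.sum_congr rfl fun x hx => ?_
  simp [hpx x hx]

/-- A set of large measure contains many well separated points. -/
lemma exists_finset_separated {E : Set ℝ} {δ : ℝ} {k : ℕ}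
    (hE : ENNReal.ofReal (2 * k * δ) < volume E) :
    ∃ S : Finset ℝ, S.card = k + 1 ∧ ↑S ⊆ E ∧ ∀ x ∈ S, ∀ y ∈ S, x ≠ y → δ ≤ |x - y| := by
  classical
  suffices H : ∀ m ≤ k + 1, ∃ S : Finset ℝ, S.card = m ∧ ↑S ⊆ E ∧
      ∀ x ∈ S, ∀ y ∈ S, x ≠ y → δ ≤ |x - y| from H _ le_rfl
  intro m
  induction m with
  | zero => exact fun _ => ⟨∅, by simp⟩
  | succ m ih =>
    intro hm
    obtain ⟨S, hS, hSE, hsep⟩ := ih (by omega)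
    have hvol : volume (⋃ x ∈ S, Metric.ball x δ) < volume E := by
      refine lt_of_le_of_lt ((measure_biUnion_finset_le _ _).trans ?_) hE
      simp only [Real.volume_ball, Finset.sum_const, hS]
      rw [← ENNReal.ofReal_nsmul]
      rcases le_or_gt 0 δ with hδ | hδ
      · apply ENNReal.ofReal_le_ofReal
        have : (m : ℝ) ≤ k := by exact_mod_cast (by omega : m ≤ k)
        rw [nsmul_eq_mul]
        nlinarith
      · rw [ENNReal.ofReal_of_nonpos]
        · exact zero_le
        · rw [nsmul_eq_mul]
          have : (0 : ℝ) ≤ m := by positivity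
          nlinarith
    obtain ⟨x, hxE, hx⟩ : ∃ x ∈ E, x ∉ ⋃ x ∈ S, Metric.ball x δ := by
      by_contra! hcon
      exact absurd (measure_mono (μ := volume) hcon) (not_le.2 hvol)
    simp only [Set.mem_iUnion, Metric.mem_ball, not_exists, not_lt, Real.dist_eq] at hx
    by_cases hxS : x ∈ S
    · have hδ : δ ≤ 0 := by simpa using hx x hxS
      have hinf : E.Infinite := fun hfin => by
        simp [hfin.measure_zero] at hE
      obtain ⟨T, hTE, hT⟩ := hinf.exists_subset_card_eq (m + 1)
      exact ⟨T, hT, hTE, fun y _ z _ _ => hδ.trans (abs_nonneg _)⟩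
    · refine ⟨insert x S, by rw [Finset.card_insert_of_notMem hxS, hS], ?_, ?_⟩
      · rw [Finset.coe_insert]; exact Set.insert_subset hxE hSE
      · intro y hy z hz hyz
        rw [Finset.mem_insert] at hy hz
        rcases hy with rfl | hy <;> rcases hz with rfl | hz
        · exact absurd rfl hyz
        · exact hx z hz
        · rw [abs_sub_comm]; exact hx y hy
        · exact hsep y hy z hz hyz

/-- If the `k`-th derivative of `f` is comparable to a constant on an interval, then `f` cannot be
small at `k + 1` well separated points without being small everywhere. -/
lemma abs_le_of_small_at_separated {f : ℝ → ℝ} (hf : ContDiff ℝ (⊤ : ℕ∞) f) {I : Set ℝ}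
    (hI : I.OrdConnected) {k : ℕ} {a : ℝ}
    (hlow : ∀ t ∈ I, a ≤ |iteratedDeriv k f t|) (hup : ∀ t ∈ I, |iteratedDeriv k f t| ≤ 3 * a)
    {S : Finset ℝ} (hS : S.card = k + 1) (hSI : ↑S ⊆ I) {δ R κ : ℝ} (hδ : 0 < δ) (hR : 1 ≤ R)
    (hsep : ∀ x ∈ S, ∀ y ∈ S, x ≠ y → δ ≤ |x - y|) (hdiam : ∀ x ∈ I, ∀ y ∈ I, |x - y| ≤ R * δ)
    (hsmall : ∀ x ∈ S, |f x| ≤ κ) {z : ℝ} (hz : z ∈ I) :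
    |f z| ≤ (4 * k + 4) * R ^ k * κ := by
  classical
  have hκ : 0 ≤ κ := by
    obtain ⟨x, hx⟩ : S.Nonempty := Finset.card_pos.1 (by omega)
    exact (abs_nonneg _).trans (hsmall x hx)
  have hRk : 1 ≤ R ^ k := one_le_pow₀ hR
  by_cases hzS : z ∈ S
  · refine (hsmall z hzS).trans ?_
    have : 1 ≤ (4 * (k : ℝ) + 4) * R ^ k := by
      have : (0 : ℝ) ≤ k := by positivity
      nlinarith
    nlinarith
  have hfac : (0 : ℝ) < k.factorial := by positivity
  -- lower bound for the products of differences of separated points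
  have hprod : ∀ T ⊆ S, ∀ x ∈ S, x ∉ T → δ ^ T.card ≤ |∏ y ∈ T, (x - y)| := by
    intro T hT x hx hxT
    rw [Finset.abs_prod, ← Finset.prod_const]
    exact Finset.prod_le_prod (fun _ _ => hδ.le)
      (fun y hy => hsep x hx y (hT hy) (fun h => hxT (h ▸ hy)))
  have ha : a ≤ k.factorial * ((k + 1) * (κ / δ ^ k)) := by
    obtain ⟨ξ, hξ, h⟩ := exists_iteratedDeriv_eq_sum_div hf hI hS hSI
    refine (hlow ξ hξ).trans ?_
    rw [h, abs_mul, abs_of_pos hfac]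
    refine mul_le_mul_of_nonneg_left ?_ hfac.le
    refine (Finset.abs_sum_le_sum_abs _ _).trans ?_
    have : ∀ x ∈ S, |f x / ∏ y ∈ S.erase x, (x - y)| ≤ κ / δ ^ k := by
      intro x hx
      rw [abs_div]
      have h2 := hprod (S.erase x) (Finset.erase_subset _ _) x hx (Finset.notMem_erase _ _)
      rw [Finset.card_erase_of_mem hx, hS, Nat.add_sub_cancel] at h2
      exact div_le_div₀ hκ (hsmall x hx) (by positivity) h2
    refine (Finset.sum_le_card_nsmul _ _ _ this).trans ?_
    rw [hS, nsmul_eq_mul]; push_cast; exact le_rfl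
  obtain ⟨x₀, hx₀⟩ : S.Nonempty := Finset.card_pos.1 (by omega)
  set T := S.erase x₀ with hTdef
  have hTS : T ⊆ S := Finset.erase_subset _ _
  have hTcard : T.card = k := by rw [hTdef, Finset.card_erase_of_mem hx₀, hS]; simp
  have hzT : z ∉ T := fun h => hzS (hTS h)
  obtain ⟨ξ, hξ, h⟩ := exists_iteratedDeriv_eq_sum_div hf hI (S := insert z T) (k := k)
    (by rw [Finset.card_insert_of_notMem hzT, hTcard])
    (by rw [Finset.coe_insert]; exact Set.insert_subset hz (fun x hx => hSI (hTS hx)))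
  rw [Finset.sum_insert hzT, Finset.erase_insert hzT] at h
  set P := ∏ y ∈ T, (z - y) with hP
  have hP0 : P ≠ 0 := Finset.prod_ne_zero_iff.2 fun y hy => sub_ne_zero.2 fun e => hzT (e ▸ hy)
  have hPle : |P| ≤ (R * δ) ^ k := by
    rw [hP, Finset.abs_prod, ← hTcard]
    rw [← Finset.prod_const]
    exact Finset.prod_le_prod (fun _ _ => abs_nonneg _)
      (fun y hy => hdiam z hz y (hSI (hTS hy)))
  have hfz : f z = P * (iteratedDeriv k f ξ / k.factorial) -
      ∑ x ∈ T, P * (f x / ∏ y ∈ (insert z T).erase x, (x - y)) := by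
    rw [h, ← Finset.mul_sum]; field_simp; ring
  have hterm : ∀ x ∈ T, |P * (f x / ∏ y ∈ (insert z T).erase x, (x - y))| ≤ R ^ k * κ := by
    intro x hx
    have hxz : x ≠ z := fun e => hzT (e ▸ hx)
    have hzx : z ∉ T.erase x := fun h => hzT (Finset.erase_subset _ _ h)
    rw [Finset.erase_insert_of_ne hxz.symm, Finset.prod_insert hzx, hP,
      ← Finset.mul_prod_erase T _ hx]
    have h1 : δ ^ (k - 1) ≤ |∏ y ∈ T.erase x, (x - y)| := by
      have := hprod (T.erase x) ((Finset.erase_subset _ _).trans hTS) x (hTS hx)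
        (Finset.notMem_erase _ _)
      rwa [Finset.card_erase_of_mem hx, hTcard] at this
    have h2 : |∏ y ∈ T.erase x, (z - y)| ≤ (R * δ) ^ (k - 1) := by
      rw [Finset.abs_prod, ← hTcard, ← Finset.card_erase_of_mem hx, ← Finset.prod_const]
      exact Finset.prod_le_prod (fun _ _ => abs_nonneg _)
        (fun y hy => hdiam z hz y (hSI (hTS (Finset.erase_subset _ _ hy))))
    have hA : 0 < |∏ y ∈ T.erase x, (x - y)| := lt_of_lt_of_le (by positivity) h1
    have hxz' : |x - z| ≠ 0 := abs_ne_zero.2 (sub_ne_zero.2 hxz)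
    rw [abs_mul, abs_mul, abs_div, abs_mul, abs_sub_comm z x]
    have : |x - z| * |∏ y ∈ T.erase x, (z - y)| *
        (|f x| / (|x - z| * |∏ y ∈ T.erase x, (x - y)|)) =
        |f x| * (|∏ y ∈ T.erase x, (z - y)| / |∏ y ∈ T.erase x, (x - y)|) := by
      field_simp
    rw [this, mul_comm (R ^ k)]
    refine mul_le_mul (hsmall x (hTS hx)) ?_ (by positivity) hκ
    rw [div_le_iff₀ hA]
    refine h2.trans ?_
    rw [mul_pow]
    exact mul_le_mul (pow_le_pow_right₀ hR (by omega)) h1 (by positivity) (by positivity)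
  have hmain : |P * (iteratedDeriv k f ξ / k.factorial)| ≤ 3 * (k + 1) * R ^ k * κ := by
    rw [abs_mul, abs_div, abs_of_pos hfac]
    have h3 : |iteratedDeriv k f ξ| / k.factorial ≤ 3 * ((k + 1) * (κ / δ ^ k)) := by
      rw [div_le_iff₀ hfac]
      refine (hup ξ hξ).trans ?_
      · have := ha
        nlinarith
    refine (mul_le_mul hPle h3 (by positivity) (by positivity)).trans (le_of_eq ?_)
    rw [mul_pow]; field_simp
  rw [hfz]
  refine (abs_sub _ _).trans ?_
  have hsum : |∑ x ∈ T, P * (f x / ∏ y ∈ (insert z T).erase x, (x - y))| ≤ k * (R ^ k * κ) := by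
    refine (Finset.abs_sum_le_sum_abs _ _).trans ?_
    refine (Finset.sum_le_card_nsmul _ _ _ hterm).trans ?_
    rw [hTcard, nsmul_eq_mul]
  have : 0 ≤ R ^ k * κ := by positivity
  nlinarith

/-- At a point `t₀`, every nonzero combination of linearly independent analytic functions has a
derivative of bounded order which is comparable to a constant near `t₀`, uniformly. -/
lemma exists_uniform_iteratedDeriv_bounds {ι : Type*} [Fintype ι] {w : ℝ → ι → ℝ}
    (hw : ∀ j, AnalyticOnNhd ℝ (fun t => w t j) Set.univ)
    (hnd : ∀ c : ι → ℝ, (∀ t, ∑ j, c j * w t j = 0) → c = 0) (t₀ : ℝ) :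
    ∃ τ > 0, ∃ l : ℕ, ∀ c : ι → ℝ, c ≠ 0 → ∃ k ≤ l, ∃ a : ℝ, ∀ t ∈ Metric.ball t₀ τ,
      a ≤ |iteratedDeriv k (fun t => ∑ j, c j * w t j) t| ∧
      |iteratedDeriv k (fun t => ∑ j, c j * w t j) t| ≤ 3 * a := by
  have hcd : ∀ j, ContDiff ℝ (⊤ : ℕ∞) (fun t => w t j) := fun j =>
    contDiff_iff_contDiffAt.2 fun t => (hw j t trivial).contDiffAt
  have hder : ∀ (k : ℕ) (c : ι → ℝ) (t : ℝ), iteratedDeriv k (fun t => ∑ j, c j * w t j) t =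
      ∑ j, c j * iteratedDeriv k (fun t => w t j) t := by
    intro k c t
    rw [iteratedDeriv_fun_sum]
    · exact Finset.sum_congr rfl fun j _ => iteratedDeriv_const_mul_field _ _
    · intro j _
      exact (contDiffAt_const.mul (hcd j).contDiffAt).of_le (by exact_mod_cast le_top)
  have hcont : ∀ k : ℕ, Continuous (fun z : (ι → ℝ) × ℝ =>
      |∑ j, z.1 j * iteratedDeriv k (fun t => w t j) z.2|) := by
    intro k
    refine continuous_abs.comp (continuous_finsetSum _ fun j _ => ?_)
    exact ((continuous_apply j).comp continuous_fst).mul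
      (((hcd j).continuous_iteratedDeriv k (by exact_mod_cast le_top)).comp continuous_snd)
  have hsph : ∃ τ > 0, ∃ l : ℕ, ∀ c ∈ Metric.sphere (0 : ι → ℝ) 1, ∃ k ≤ l, ∃ a : ℝ,
      ∀ t ∈ Metric.ball t₀ τ, a ≤ |∑ j, c j * iteratedDeriv k (fun t => w t j) t| ∧
      |∑ j, c j * iteratedDeriv k (fun t => w t j) t| ≤ 3 * a := by
    refine (isCompact_sphere (0 : ι → ℝ) 1).induction_on
      (p := fun s => ∃ τ > 0, ∃ l : ℕ, ∀ c ∈ s, ∃ k ≤ l, ∃ a : ℝ, ∀ t ∈ Metric.ball t₀ τ,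
        a ≤ |∑ j, c j * iteratedDeriv k (fun t => w t j) t| ∧
        |∑ j, c j * iteratedDeriv k (fun t => w t j) t| ≤ 3 * a) ?_ ?_ ?_ ?_
    · exact ⟨1, one_pos, 0, by simp⟩
    · rintro s t hst ⟨τ, hτ, l, h⟩
      exact ⟨τ, hτ, l, fun c hc => h c (hst hc)⟩
    · rintro s t ⟨τ, hτ, l, h⟩ ⟨τ', hτ', l', h'⟩
      refine ⟨min τ τ', lt_min hτ hτ', max l l', ?_⟩
      rintro c (hc | hc)
      · obtain ⟨k, hk, a, H⟩ := h c hc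
        exact ⟨k, hk.trans (le_max_left _ _), a, fun t ht =>
          H t (Metric.ball_subset_ball (min_le_left _ _) ht)⟩
      · obtain ⟨k, hk, a, H⟩ := h' c hc
        exact ⟨k, hk.trans (le_max_right _ _), a, fun t ht =>
          H t (Metric.ball_subset_ball (min_le_right _ _) ht)⟩
    · intro c hc
      have hc0 : c ≠ 0 := by
        rintro rfl
        simp at hc
      have han : AnalyticOnNhd ℝ (fun t => ∑ j, c j * w t j) Set.univ := by
        intro t _
        exact Finset.analyticAt_fun_sum _ fun j _ => analyticAt_const.mul (hw j t trivial)
      obtain ⟨k, hk⟩ : ∃ k : ℕ, iteratedDeriv k (fun t => ∑ j, c j * w t j) t₀ ≠ 0 := by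
        by_contra! hcon
        apply hc0
        apply hnd
        have h1 : analyticOrderAt (fun t => ∑ j, c j * w t j) t₀ = ⊤ := by
          rw [ENat.eq_top_iff_forall_ge]
          intro m
          exact (natCast_le_analyticOrderAt_iff_iteratedDeriv_eq_zero (han t₀ trivial)).2
            fun i _ => hcon i
        rw [analyticOrderAt_eq_top] at h1
        intro t
        exact han.eqOn_zero_of_preconnected_of_eventuallyEq_zero isPreconnected_univ
          (Set.mem_univ t₀) h1 (Set.mem_univ t)
      rw [hder] at hk
      set b := |∑ j, c j * iteratedDeriv k (fun t => w t j) t₀| with hb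
      have hbpos : 0 < b := abs_pos.2 hk
      have hnhds : {z : (ι → ℝ) × ℝ | b / 2 < |∑ j, z.1 j * iteratedDeriv k (fun t => w t j) z.2| ∧
          |∑ j, z.1 j * iteratedDeriv k (fun t => w t j) z.2| < 3 * (b / 2)} ∈ nhds (c, t₀) := by
        have := (hcont k).tendsto (c, t₀)
        exact this (Ioo_mem_nhds (a := b / 2) (b := 3 * (b / 2)) (by simp only [← hb]; linarith)
          (by simp only [← hb]; linarith))
      rw [nhds_prod_eq, Filter.mem_prod_iff] at hnhds
      obtain ⟨s, hs, s', hs', hss⟩ := hnhds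
      obtain ⟨τ, hτ, hτs⟩ := Metric.mem_nhds_iff.1 hs'
      refine ⟨s, mem_nhdsWithin_of_mem_nhds hs, τ, hτ, k, fun c' hc' => ⟨k, le_rfl, b / 2, ?_⟩⟩
      intro t ht
      have := hss (Set.mk_mem_prod hc' (hτs ht))
      exact ⟨this.1.le, this.2.le⟩
  obtain ⟨τ, hτ, l, H⟩ := hsph
  refine ⟨τ, hτ, l, fun c hc => ?_⟩
  have hcn : 0 < ‖c‖ := norm_pos_iff.2 hc
  obtain ⟨k, hk, a, h⟩ := H (‖c‖⁻¹ • c) (by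
    rw [mem_sphere_zero_iff_norm, norm_smul, norm_inv, norm_norm, inv_mul_cancel₀ hcn.ne'])
  refine ⟨k, hk, ‖c‖ * a, fun t ht => ?_⟩
  have h1 := h t ht
  have h2 : ∑ j, (‖c‖⁻¹ • c) j * iteratedDeriv k (fun t => w t j) t =
      ‖c‖⁻¹ * ∑ j, c j * iteratedDeriv k (fun t => w t j) t := by
    rw [Finset.mul_sum]
    exact Finset.sum_congr rfl fun j _ => by simp [mul_assoc]
  rw [h2, abs_mul, abs_of_pos (inv_pos.2 hcn)] at h1
  rw [hder]
  have h3 : |∑ j, c j * iteratedDeriv k (fun t => w t j) t| =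
      ‖c‖ * (‖c‖⁻¹ * |∑ j, c j * iteratedDeriv k (fun t => w t j) t|) := by
    field_simp
  rw [h3]
  constructor
  · exact mul_le_mul_of_nonneg_left h1.1 hcn.le
  · nlinarith [mul_le_mul_of_nonneg_left h1.2 hcn.le]

/-- Combinations of linearly independent analytic functions are uniformly good near a point:
relatively small values are taken only on sets of relatively small measure. -/
lemma exists_uniformly_good {ι : Type*} [Fintype ι] {w : ℝ → ι → ℝ}
    (hw : ∀ j, AnalyticOnNhd ℝ (fun t => w t j) Set.univ)
    (hnd : ∀ c : ι → ℝ, (∀ t, ∑ j, c j * w t j = 0) → c = 0) (t₀ : ℝ) :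
    ∃ τ > 0, ∀ η : ℝ, 0 < η → ∃ ε : ℝ, 0 < ε ∧ ε ≤ 1 ∧ ∀ (c : ι → ℝ) (p q : ℝ), p < q →
      Set.Ico p q ⊆ Metric.ball t₀ τ → ∀ ρ : ℝ, 0 < ρ →
      (∃ x ∈ Set.Ico p q, ρ ≤ |∑ j, c j * w x j|) →
      volume {x ∈ Set.Ico p q | |∑ j, c j * w x j| < ε * ρ} ≤ ENNReal.ofReal (η * (q - p)) := by
  obtain ⟨τ, hτ, l, H⟩ := exists_uniform_iteratedDeriv_bounds hw hnd t₀
  refine ⟨τ, hτ, fun η hη => ?_⟩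
  set R : ℝ := 2 * (l + 1) / η + 1 with hR
  have hR1 : 1 ≤ R := by
    have : 0 ≤ 2 * ((l : ℝ) + 1) / η := by positivity
    linarith
  have hRpos : 0 < R := by linarith
  set M : ℝ := (4 * l + 4) * R ^ l with hM
  have hMpos : 0 < M := by positivity
  refine ⟨min 1 (1 / (2 * M)), by positivity, min_le_left _ _, ?_⟩
  intro c p q hpq hsub ρ hρ ⟨z, hz, hρz⟩
  by_contra! hcon
  have hc : c ≠ 0 := by
    rintro rfl
    simp at hρz
    linarith
  obtain ⟨k, hk, a, h⟩ := H c hc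
  have hkl : (k : ℝ) ≤ l := by exact_mod_cast hk
  set δ : ℝ := (q - p) / R with hδ
  have hδpos : 0 < δ := div_pos (by linarith) hRpos
  have hδR : R * δ = q - p := by rw [hδ]; field_simp
  obtain ⟨S, hS, hSE, hsep⟩ := exists_finset_separated (k := k) (δ := δ)
    (lt_of_le_of_lt (ENNReal.ofReal_le_ofReal (by
      rw [← hδR]
      have : η * R = 2 * (l + 1) + η := by rw [hR]; field_simp
      nlinarith)) hcon)
  have hcd : ContDiff ℝ (⊤ : ℕ∞) (fun t => ∑ j, c j * w t j) :=
    ContDiff.sum fun j _ => contDiff_const.mul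
      (contDiff_iff_contDiffAt.2 fun t => (hw j t trivial).contDiffAt)
  have hbound := abs_le_of_small_at_separated hcd (Set.ordConnected_Ico (a := p) (b := q))
    (fun t ht => (h t (hsub ht)).1) (fun t ht => (h t (hsub ht)).2) hS
    (fun x hx => (hSE hx).1) hδpos hR1 hsep
    (fun x hx y hy => by
      rw [hδR, abs_le]; constructor <;> linarith [hx.1, hx.2, hy.1, hy.2])
    (fun x hx => (hSE hx).2.le) hz
  have hle : (4 * (k : ℝ) + 4) * R ^ k ≤ M :=
    mul_le_mul (by linarith) (pow_le_pow_right₀ hR1 hk) (by positivity) (by positivity)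
  have hε : min 1 (1 / (2 * M)) * ρ ≤ 1 / (2 * M) * ρ :=
    mul_le_mul_of_nonneg_right (min_le_right _ _) hρ.le
  have hfin : (4 * (k : ℝ) + 4) * R ^ k * (min 1 (1 / (2 * M)) * ρ) ≤ M * (1 / (2 * M) * ρ) :=
    mul_le_mul hle hε (by positivity) hMpos.le
  have : M * (1 / (2 * M) * ρ) = ρ / 2 := by field_simp
  linarith

/-- A point `x` is marked, relative to a family of functions indexed by a subset `S` of a poset, if
there is a chain in `S` on which the functions take values in `[ε, ρ)` at `x`, while those indexed
by the other elements of `S` comparable with the whole chain are at least `ρ` at `x`. -/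
def IsMarked {P : Type*} [PartialOrder P] (ψ : P → ℝ → ℝ) (ε ρ : ℝ) (S : Set P) (x : ℝ) : Prop :=
  ∃ C : Finset P, ↑C ⊆ S ∧ IsChain (· ≤ ·) (C : Set P) ∧ (∀ s ∈ C, ε ≤ ψ s x ∧ ψ s x < ρ) ∧
    ∀ s ∈ S, s ∉ C → (∀ c ∈ C, s ≤ c ∨ c ≤ s) → ρ ≤ ψ s x

lemma IsMarked.of_comparable {P : Type*} [PartialOrder P] {ψ : P → ℝ → ℝ} {ε ρ : ℝ} {S : Set P}
    {x : ℝ} {s : P} (hs : s ∈ S) (hε : ε ≤ ψ s x) (hρ : ψ s x < ρ)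
    (h : IsMarked ψ ε ρ {t ∈ S | t ≠ s ∧ (t ≤ s ∨ s ≤ t)} x) : IsMarked ψ ε ρ S x := by
  classical
  obtain ⟨C, hCS, hC, hval, hmax⟩ := h
  refine ⟨insert s C, ?_, ?_, ?_, ?_⟩
  · rw [Finset.coe_insert]
    exact Set.insert_subset hs fun t ht => (hCS ht).1
  · rw [Finset.coe_insert]
    exact hC.insert fun t ht _ => (hCS ht).2.2.symm
  · intro t ht
    rcases Finset.mem_insert.1 ht with rfl | ht
    exacts [⟨hε, hρ⟩, hval t ht]
  · intro t ht htC hcomp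
    rw [Finset.mem_insert, not_or] at htC
    exact hmax t ⟨ht, htC.1, hcomp s (Finset.mem_insert_self _ _)⟩ htC.2
      fun c hc => hcomp c (Finset.mem_insert_of_mem hc)

/-- **Quantitative nondivergence**, in terms of functions indexed by a poset of bounded height. -/
lemma volume_not_isMarked_le {P : Type*} [PartialOrder P] {ψ : P → ℝ → ℝ} {ε ρ η : ℝ}
    (hη : 0 ≤ η) {I : Set ℝ} (hcont : ∀ s, Continuous (ψ s))
    (hgood : ∀ s p q, p < q → Set.Ico p q ⊆ I → (∃ x ∈ Set.Ico p q, ρ ≤ ψ s x) →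
      volume {x ∈ Set.Ico p q | ψ s x < ε} ≤ ENNReal.ofReal (η * (q - p)))
    (k : ℕ) : ∀ S : Set P, (∀ C : Finset P, ↑C ⊆ S → IsChain (· ≤ ·) (C : Set P) → C.card ≤ k) →
      ∀ p q, p < q → Set.Ico p q ⊆ I → (∀ s ∈ S, ∃ x ∈ Set.Ico p q, ρ ≤ ψ s x) →
      volume {x ∈ Set.Ico p q | ¬ IsMarked ψ ε ρ S x} ≤ ENNReal.ofReal (4 ^ k * η * (q - p)) := by
  classical
  induction k with
  | zero =>
    intro S hS p q hpq hI hsup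
    have hSe : S = ∅ := by
      refine Set.eq_empty_of_forall_notMem fun s hs => ?_
      have := hS {s} (by simpa using hs) (by simp)
      simp at this
    have : {x ∈ Set.Ico p q | ¬ IsMarked ψ ε ρ S x} = ∅ := by
      refine Set.eq_empty_of_forall_notMem fun x hx => hx.2 ?_
      exact ⟨∅, by simp, by simp, by simp, by simp [hSe]⟩
    rw [this]; simp
  | succ k ih =>
    intro S hS
    -- an interval on which some function stays below `ρ`, inside one where none does
    have hbad : ∀ p q p' q', p < q → Set.Ico p q ⊆ Set.Ico p' q' → q' - p' = 2 * (q - p) →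
        Set.Ico p' q' ⊆ I → (∀ s ∈ S, ∃ x ∈ Set.Ico p' q', ρ ≤ ψ s x) →
        (∃ s ∈ S, ∀ x ∈ Set.Ico p q, ψ s x < ρ) →
        volume {x ∈ Set.Ico p q | ¬ IsMarked ψ ε ρ S x} ≤
          ENNReal.ofReal (4 ^ (k + 1) * η * (q - p)) := by
      rintro p q p' q' hpq hsub hlen hI hsup ⟨s, hs, hsρ⟩
      set S' := {t ∈ S | t ≠ s ∧ (t ≤ s ∨ s ≤ t)} with hS'
      have h1 := ih S' (fun C hCS hC => by
        have hsC : s ∉ C := fun h => (hCS h).2.1 rfl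
        have := hS (insert s C) (by
            rw [Finset.coe_insert]
            exact Set.insert_subset hs fun t ht => (hCS ht).1) (by
            rw [Finset.coe_insert]
            exact hC.insert fun t ht _ => (hCS ht).2.2.symm)
        rw [Finset.card_insert_of_notMem hsC] at this
        omega) p' q' (by linarith) hI (fun t ht => hsup t ht.1)
      have h2 := hgood s p' q' (by linarith) hI (hsup s hs)
      have hcover : {x ∈ Set.Ico p q | ¬ IsMarked ψ ε ρ S x} ⊆
          {x ∈ Set.Ico p' q' | ¬ IsMarked ψ ε ρ S' x} ∪ {x ∈ Set.Ico p' q' | ψ s x < ε} := by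
        rintro x ⟨hx, hmx⟩
        by_cases hε : ψ s x < ε
        · exact Or.inr ⟨hsub hx, hε⟩
        · exact Or.inl ⟨hsub hx, fun h => hmx (h.of_comparable hs (not_lt.1 hε) (hsρ x hx))⟩
      refine (measure_mono hcover).trans ((measure_union_le _ _).trans ?_)
      refine (add_le_add h1 h2).trans ?_
      have hlen' : 0 ≤ q - p := by linarith
      rw [← ENNReal.ofReal_add (by rw [hlen]; positivity) (by rw [hlen]; positivity), hlen]
      apply ENNReal.ofReal_le_ofReal
      have h4 : (1 : ℝ) ≤ 4 ^ k := one_le_pow₀ (by norm_num)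
      have : 0 ≤ η * (q - p) := by positivity
      rw [pow_succ]
      nlinarith
    -- points around which some function is below `ρ` at the scale `δ`
    set X : ℝ → Set ℝ := fun δ => {x | ∃ s ∈ S, ∀ y, |y - x| ≤ δ → ψ s y < ρ} with hX
    have hδ : ∀ (δ : ℝ) (t : ℕ) (p q : ℝ), p < q → q - p ≤ 2 ^ t * δ → Set.Ico p q ⊆ I →
        (∀ s ∈ S, ∃ x ∈ Set.Ico p q, ρ ≤ ψ s x) →
        volume {x ∈ Set.Ico p q | x ∈ X δ ∧ ¬ IsMarked ψ ε ρ S x} ≤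
          ENNReal.ofReal (4 ^ (k + 1) * η * (q - p)) := by
      intro δ t
      induction t with
      | zero =>
        intro p q hpq hle hI hsup
        have : {x ∈ Set.Ico p q | x ∈ X δ ∧ ¬ IsMarked ψ ε ρ S x} = ∅ := by
          refine Set.eq_empty_of_forall_notMem ?_
          rintro x ⟨hx, ⟨s, hs, hsx⟩, -⟩
          obtain ⟨y, hy, hρy⟩ := hsup s hs
          refine absurd (hsx y ?_) (not_lt.2 hρy)
          rw [abs_le]
          constructor <;> linarith [hx.1, hx.2, hy.1, hy.2]
        rw [this]; simp
      | succ t iht =>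
        intro p q hpq hle hI hsup
        set m := (p + q) / 2 with hm
        have hhalf : ∀ a b, a < b → b - a = (q - p) / 2 → Set.Ico a b ⊆ Set.Ico p q →
            volume {x ∈ Set.Ico a b | x ∈ X δ ∧ ¬ IsMarked ψ ε ρ S x} ≤
              ENNReal.ofReal (4 ^ (k + 1) * η * (b - a)) := by
          intro a b hab hlen hsub
          by_cases hb : ∀ s ∈ S, ∃ x ∈ Set.Ico a b, ρ ≤ ψ s x
          · refine iht a b hab ?_ (hsub.trans hI) hb
            rw [pow_succ] at hle
            linarith
          · push Not at hb
            refine (measure_mono ?_).trans (hbad a b p q hab hsub (by linarith) hI hsup hb)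
            exact fun x hx => ⟨hx.1, hx.2.2⟩
        have h1 := hhalf p m (by linarith) (by linarith) (Set.Ico_subset_Ico_right (by linarith))
        have h2 := hhalf m q (by linarith) (by linarith) (Set.Ico_subset_Ico_left (by linarith))
        refine (measure_mono ?_).trans ((measure_union_le _ _).trans ((add_le_add h1 h2).trans ?_))
        · rintro x ⟨hx, hx'⟩
          rcases lt_or_ge x m with h | h
          · exact Or.inl ⟨⟨hx.1, h⟩, hx'⟩
          · exact Or.inr ⟨⟨h, hx.2⟩, hx'⟩
        · have e1 : 0 ≤ m - p := by linarith
          have e2 : 0 ≤ q - m := by linarith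
          rw [← ENNReal.ofReal_add (by positivity) (by positivity)]
          exact ENNReal.ofReal_le_ofReal (le_of_eq (by ring))
    intro p q hpq hI hsup
    have hcov : {x ∈ Set.Ico p q | ¬ IsMarked ψ ε ρ S x} ⊆
        ⋃ N : ℕ, {x ∈ Set.Ico p q | x ∈ X (1 / (N + 1)) ∧ ¬ IsMarked ψ ε ρ S x} := by
      rintro x ⟨hx, hmx⟩
      obtain ⟨s, hs, hsx⟩ : ∃ s ∈ S, ψ s x < ρ := by
        by_contra! hcon
        exact hmx ⟨∅, by simp, by simp, by simp, fun s hs _ _ => hcon s hs⟩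
      obtain ⟨r, hr, hball⟩ := Metric.mem_nhds_iff.1
        ((hcont s).continuousAt.eventually_lt continuousAt_const hsx)
      obtain ⟨N, hN⟩ := exists_nat_one_div_lt hr
      refine Set.mem_iUnion.2 ⟨N, hx, ⟨s, hs, fun y hy => hball ?_⟩, hmx⟩
      rw [Metric.mem_ball, Real.dist_eq]
      exact hy.trans_lt hN
    refine (measure_mono hcov).trans ?_
    have hmono : Monotone fun N : ℕ =>
        {x ∈ Set.Ico p q | x ∈ X (1 / ((N : ℝ) + 1)) ∧ ¬ IsMarked ψ ε ρ S x} := by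
      rintro N M hNM x ⟨hx, ⟨s, hs, hsx⟩, hmx⟩
      exact ⟨hx, ⟨s, hs, fun y hy => hsx y (hy.trans (Nat.one_div_le_one_div hNM))⟩, hmx⟩
    rw [hmono.measure_iUnion]
    refine iSup_le fun N => ?_
    have hN : (0 : ℝ) < 1 / ((N : ℝ) + 1) := by positivity
    obtain ⟨t, ht⟩ := pow_unbounded_of_one_lt ((q - p) / (1 / ((N : ℝ) + 1))) one_lt_two
    exact hδ _ t p q hpq (by rw [div_lt_iff₀ hN] at ht; exact ht.le) hI hsup

lemma span_range_eq_top_of_forall {K ι κ : Type*} [Field K] [Fintype κ] {v : ι → κ → K}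
    (h : ∀ c : κ → K, (∀ i, ∑ j, c j * v i j = 0) → c = 0) :
    Submodule.span K (Set.range v) = ⊤ := by
  classical
  by_contra hne
  obtain ⟨f, hf, hle⟩ := Submodule.exists_le_ker_of_lt_top _ (lt_top_iff_ne_top.2 hne)
  refine hf (LinearMap.pi_ext' fun j => LinearMap.ext_ring ?_)
  have hc := h (fun j => f (Pi.single j 1)) fun i => by
    have h0 : f (v i) = 0 := hle (Submodule.subset_span ⟨i, rfl⟩)
    rw [← h0]
    conv_rhs => rw [pi_eq_sum_univ' (v i), map_sum]
    exact Finset.sum_congr rfl fun j _ => by rw [map_smul, smul_eq_mul, mul_comm]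
  simpa using congrFun hc j

lemma exists_linearIndependent_comp_of_forall {K ι κ : Type*} [Field K] [Fintype κ]
    {v : ι → κ → K} (h : ∀ c : κ → K, (∀ i, ∑ j, c j * v i j = 0) → c = 0) :
    ∃ e : κ → ι, LinearIndependent K (v ∘ e) := by
  obtain ⟨s, hs, hspan, hli⟩ := exists_linearIndependent K (Set.range v)
  rw [span_range_eq_top_of_forall h] at hspan
  let B := Module.Basis.mk hli (by rw [Subtype.range_coe, hspan])
  let e := (Pi.basisFun K κ).indexEquiv B
  choose g hg using fun x : s => hs x.2
  refine ⟨fun j => g (e j), ?_⟩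
  have : v ∘ (fun j => g (e j)) = (Subtype.val : s → κ → K) ∘ e := by
    ext1 j
    exact hg (e j)
  rw [this]
  exact hli.comp _ e.injective

/-- **Minkowski's linear forms theorem.** -/
lemma exists_int_ne_zero_abs_sum_lt {r : ℕ} (N : Matrix (Fin r) (Fin r) ℝ) (hN : N.det ≠ 0) {δ : ℝ}
    (hδ : 0 < δ) (hlt : |N.det| < δ ^ r) :
    ∃ a : Fin r → ℤ, a ≠ 0 ∧ ∀ i, |∑ j, N i j * a j| < δ := by
  classical
  set b := Pi.basisFun ℝ (Fin r)
  set L := (Submodule.span ℤ (Set.range b)).toAddSubgroup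
  have hcount : Countable L := inferInstanceAs (Countable (Submodule.span ℤ (Set.range b)))
  have hdet : LinearMap.det (Matrix.toLin' N) ≠ 0 := by rwa [LinearMap.det_toLin']
  obtain ⟨x, hx0, hx⟩ := exists_ne_zero_mem_lattice_of_measure_mul_two_pow_lt_measure
    (ZSpan.isAddFundamentalDomain' b volume) (s := (Matrix.toLin' N) ⁻¹' Metric.ball 0 δ)
    (fun x hx => by
      rw [Set.mem_preimage, map_neg, mem_ball_zero_iff, norm_neg]
      exact mem_ball_zero_iff.1 hx)
    ((convex_ball (0 : Fin r → ℝ) δ).linear_preimage _) (by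
      rw [Measure.addHaar_preimage_linearMap volume hdet, LinearMap.det_toLin',
        ZSpan.volume_fundamentalDomain, Real.volume_pi_ball _ hδ]
      have : (Matrix.of b).det = 1 := by
        rw [show Matrix.of (b : Fin r → Fin r → ℝ) = 1 from by
          ext i j; simp [b, Matrix.one_apply, Pi.single_apply, eq_comm]]
        exact Matrix.det_one
      rw [this, abs_one, ENNReal.ofReal_one, one_mul, Module.finrank_fin_fun, Fintype.card_fin,
        ← ENNReal.ofReal_mul (abs_nonneg _)]
      have h2 : (2 : ENNReal) ^ r = ENNReal.ofReal (2 ^ r) := by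
        rw [ENNReal.ofReal_pow (by norm_num)]; simp
      rw [h2, ENNReal.ofReal_lt_ofReal_iff (by positivity), abs_inv, mul_pow]
      have hpos : 0 < |N.det| := abs_pos.2 hN
      rw [inv_mul_eq_div, lt_div_iff₀ hpos]
      exact mul_lt_mul_of_pos_left hlt (by positivity))
  obtain ⟨x, hxL⟩ := x
  have hcoord : ∀ j, ∃ a : ℤ, (a : ℝ) = x j := by
    intro j
    have := (b.mem_span_iff_repr_mem ℤ x).1 hxL j
    simpa [b] using this
  choose a ha using hcoord
  refine ⟨a, ?_, ?_⟩
  · rintro rfl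
    apply hx0
    ext j
    simpa using (ha j).symm
  · intro i
    rw [Set.mem_preimage, mem_ball_zero_iff, pi_norm_lt_iff hδ] at hx
    have := hx i
    rw [Matrix.toLin'_apply, Matrix.mulVec, dotProduct, Real.norm_eq_abs] at this
    simpa only [ha] using this

/-- The `r × r` minors of the matrix with columns `A (b j)`. -/
noncomputable def minorDet {k r : ℕ} (A : (Fin k → ℝ) →ₗ[ℝ] (Fin k → ℝ)) (b : Fin r → Fin k → ℤ)
    (e : Fin r → Fin k) : ℝ :=
  (Matrix.of fun i j => A (fun l => (b j l : ℝ)) (e i)).det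

/-- The size of the image under `A` of the lattice with basis `b`: the largest minor. -/
noncomputable def covol {k r : ℕ} (A : (Fin k → ℝ) →ₗ[ℝ] (Fin k → ℝ)) (b : Fin r → Fin k → ℤ) :
    ℝ :=
  ‖fun e => minorDet A b e‖

lemma abs_minorDet_le_covol {k r : ℕ} (A : (Fin k → ℝ) →ₗ[ℝ] (Fin k → ℝ))
    (b : Fin r → Fin k → ℤ) (e : Fin r → Fin k) : |minorDet A b e| ≤ covol A b :=
  norm_le_pi_norm (fun e => minorDet A b e) e

/-- The inclusion of integer vectors into rational vectors. -/
def intCastVec (k : ℕ) : (Fin k → ℤ) →ₗ[ℤ] (Fin k → ℚ) :=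
  (Algebra.linearMap ℤ ℚ).compLeft (Fin k)

lemma intCastVec_apply {k : ℕ} (v : Fin k → ℤ) (i : Fin k) : intCastVec k v i = (v i : ℚ) := rfl

lemma intCastVec_injective (k : ℕ) : Function.Injective (intCastVec k) := fun v w h => by
  ext i
  have := congrFun h i
  simpa only [intCastVec_apply, Int.cast_inj] using this

lemma linearIndependent_intCastVec_iff {k : ℕ} {ι : Type*} {b : ι → Fin k → ℤ} :
    LinearIndependent ℚ (intCastVec k ∘ b) ↔ LinearIndependent ℤ b := by
  rw [← LinearIndependent.iff_fractionRing ℤ ℚ]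
  exact LinearMap.linearIndependent_iff _ (LinearMap.ker_eq_bot.2 (intCastVec_injective k))

lemma eq_zero_of_sum_mul_intCast_eq_zero {k r : ℕ} {b : Fin r → Fin k → ℤ}
    (hb : LinearIndependent ℤ b) {c : Fin r → ℝ} (hc : ∀ i, ∑ j, c j * (b j i : ℝ) = 0) :
    c = 0 := by
  classical
  have hq := linearIndependent_intCastVec_iff.2 hb
  rw [Fintype.linearIndependent_iff] at hq
  obtain ⟨e, he⟩ := exists_linearIndependent_comp_of_forall
    (v := fun (i : Fin k) (j : Fin r) => (b j i : ℚ)) (fun c h => by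
      ext j
      refine hq c ?_ j
      ext i
      simpa [intCastVec_apply] using h i)
  have hdet : (Matrix.of fun i j => (b j (e i) : ℚ)).det ≠ 0 := by
    have := Matrix.linearIndependent_rows_iff_isUnit.1
      (show LinearIndependent ℚ (Matrix.of fun i j => (b j (e i) : ℚ)).row from he)
    rw [Matrix.isUnit_iff_isUnit_det] at this
    exact this.ne_zero
  have hdetR : (Matrix.of fun i j => (b j (e i) : ℝ)).det ≠ 0 := by
    have hZ : (Matrix.of fun i j => b j (e i)).det ≠ 0 := by
      intro h0
      apply hdet
      have := congrArg (Int.castRingHom ℚ) h0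
      rwa [RingHom.map_det, map_zero] at this
    have := (Int.castRingHom ℝ).map_det (Matrix.of fun i j => b j (e i))
    have h3 : (Int.castRingHom ℝ) (Matrix.of fun i j => b j (e i)).det ≠ 0 := by simpa using hZ
    rw [this] at h3
    exact h3
  refine Matrix.eq_zero_of_mulVec_eq_zero hdetR ?_
  ext i
  rw [Matrix.mulVec, dotProduct]
  simpa [mul_comm] using hc (e i)

lemma sum_mul_map_intCast {k r : ℕ} (A : (Fin k → ℝ) →ₗ[ℝ] (Fin k → ℝ)) (b : Fin r → Fin k → ℤ)
    (c : Fin r → ℝ) (i : Fin k) :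
    ∑ j, c j * A (fun l => (b j l : ℝ)) i = A (fun l => ∑ j, c j * (b j l : ℝ)) i := by
  have : (fun l => ∑ j, c j * (b j l : ℝ)) = ∑ j, c j • fun l => (b j l : ℝ) := by
    ext l; simp
  rw [this, map_sum]
  simp

lemma exists_minorDet_ne_zero {k r : ℕ} {A : (Fin k → ℝ) →ₗ[ℝ] (Fin k → ℝ)}
    (hA : Function.Injective A) {b : Fin r → Fin k → ℤ} (hb : LinearIndependent ℤ b) :
    ∃ e, minorDet A b e ≠ 0 := by
  obtain ⟨e, he⟩ := exists_linearIndependent_comp_of_forall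
    (v := fun (i : Fin k) (j : Fin r) => A (fun l => (b j l : ℝ)) i) (fun c h => by
      refine eq_zero_of_sum_mul_intCast_eq_zero hb fun i => ?_
      have : A (fun l => ∑ j, c j * (b j l : ℝ)) = 0 := by
        ext i
        rw [← sum_mul_map_intCast]
        exact h i
      exact congrFun ((map_eq_zero_iff A hA).1 this) i)
  refine ⟨e, ?_⟩
  have := Matrix.linearIndependent_rows_iff_isUnit.1
    (show LinearIndependent ℝ (Matrix.of fun i j => A (fun l => (b j l : ℝ)) (e i)).row from he)
  rw [Matrix.isUnit_iff_isUnit_det] at this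
  exact this.ne_zero

/-- If the lattice `A ℤ^k` has no short vectors, then its sublattices have no small covolume. -/
lemma le_covol_of_forall_le_norm {k r : ℕ} {A : (Fin k → ℝ) →ₗ[ℝ] (Fin k → ℝ)}
    (hA : Function.Injective A) {b : Fin r → Fin k → ℤ} (hb : LinearIndependent ℤ b) (hr : r ≤ k)
    {ε : ℝ} (hε : 0 < ε) (hε1 : ε ≤ 1)
    (hshort : ∀ v : Fin k → ℤ, v ≠ 0 → ε ≤ ‖A (fun l => (v l : ℝ))‖) :
    (ε / (k + 1)) ^ k ≤ covol A b := by
  classical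
  set δ : ℝ := ε / (k + 1) with hδ
  have hk1 : (0 : ℝ) < k + 1 := by positivity
  have hδpos : 0 < δ := by positivity
  have hδ1 : δ ≤ 1 := (div_le_one hk1).2 (by linarith [(by positivity : (0 : ℝ) ≤ k)])
  obtain ⟨e₁, he₁⟩ := exists_minorDet_ne_zero hA hb
  have : Nonempty (Fin r → Fin k) := ⟨e₁⟩
  obtain ⟨e, he⟩ := Finite.exists_max fun e => |minorDet A b e|
  have hepos : 0 < |minorDet A b e| := (abs_pos.2 he₁).trans_le (he e₁)
  by_contra! hcon
  set M : Matrix (Fin r) (Fin r) ℝ := Matrix.of fun i j => A (fun l => (b j l : ℝ)) (e i) with hM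
  have hMdet : M.det = minorDet A b e := rfl
  obtain ⟨a, ha0, ha⟩ := exists_int_ne_zero_abs_sum_lt M (by rw [hMdet]; exact abs_pos.1 hepos)
    hδpos (by
      rw [hMdet]
      refine (abs_minorDet_le_covol A b e).trans_lt (hcon.trans_le ?_)
      exact pow_le_pow_of_le_one hδpos.le hδ1 hr)
  set v : Fin k → ℤ := ∑ j, a j • b j with hv
  have hv0 : v ≠ 0 := fun h => ha0 (funext fun j => Fintype.linearIndependent_iff.1 hb a h j)
  have hvA : ∀ i, A (fun l => (v l : ℝ)) i = ∑ j, A (fun l => (b j l : ℝ)) i * a j := by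
    intro i
    have h1 := sum_mul_map_intCast A b (fun j => (a j : ℝ)) i
    rw [show (fun l => (v l : ℝ)) = fun l => ∑ j, (a j : ℝ) * (b j l : ℝ) from by
      ext l; simp [hv], ← h1]
    exact Finset.sum_congr rfl fun j _ => mul_comm _ _
  refine absurd (hshort v hv0) (not_le.2 ((pi_norm_lt_iff hε).2 fun i => ?_))
  rw [hvA, Real.norm_eq_abs]
  -- Cramer's rule expresses every row through the rows of the largest minor
  set row : Fin r → ℝ := fun j => A (fun l => (b j l : ℝ)) i with hrow
  have hcr : M.transpose.mulVec (M.transpose.cramer row) = M.det • row := by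
    rw [Matrix.mulVec_cramer, Matrix.det_transpose]
  have hupd : ∀ l, M.transpose.cramer row l = minorDet A b (Function.update e l i) := by
    intro l
    rw [Matrix.cramer_transpose_apply, minorDet]
    congr 1
    ext i' j
    by_cases h : i' = l
    · subst h; simp [hrow]
    · simp [h, hM]
  have hsum : M.det * ∑ j, row j * a j =
      ∑ l, minorDet A b (Function.update e l i) * ∑ j, M l j * a j := by
    have h1 : ∀ j, M.det * row j = ∑ l, M l j * minorDet A b (Function.update e l i) := by
      intro j
      have := congrFun hcr j
      rw [Matrix.mulVec, dotProduct] at this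
      simp only [hupd, Matrix.transpose_apply, Pi.smul_apply, smul_eq_mul] at this
      exact this.symm
    simp only [Finset.mul_sum, ← mul_assoc, h1, Finset.sum_mul]
    rw [Finset.sum_comm]
    exact Finset.sum_congr rfl fun l _ => Finset.sum_congr rfl fun j _ => by ring
  have hle : |M.det| * |∑ j, row j * a j| ≤ |M.det| * (r * δ) := by
    rw [← abs_mul, hsum]
    refine (Finset.abs_sum_le_sum_abs _ _).trans ?_
    have : ∀ l ∈ Finset.univ, |minorDet A b (Function.update e l i) * ∑ j, M l j * a j| ≤
        |M.det| * δ := by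
      intro l _
      rw [abs_mul]
      exact mul_le_mul (he _) (ha l).le (abs_nonneg _) (abs_nonneg _)
    refine (Finset.sum_le_card_nsmul _ _ _ this).trans (le_of_eq ?_)
    simp
    ring
  have hle' := le_of_mul_le_mul_left hle (by rw [hMdet]; exact hepos)
  refine hle'.trans_lt ?_
  have hrk : (r : ℝ) ≤ k := by exact_mod_cast hr
  have : (k + 1) * δ = ε := by rw [hδ]; field_simp
  nlinarith

lemma covol_cons_le {k r : ℕ} (A : (Fin k → ℝ) →ₗ[ℝ] (Fin k → ℝ)) (b : Fin r → Fin k → ℤ)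
    (v : Fin k → ℤ) :
    covol A (Fin.cons v b : Fin (r + 1) → Fin k → ℤ) ≤
      (r + 1) * (‖A (fun l => (v l : ℝ))‖ * covol A b) := by
  have h0 : 0 ≤ covol A b := norm_nonneg _
  refine (pi_norm_le_iff_of_nonneg (by positivity)).2 fun e => ?_
  rw [minorDet, Matrix.det_succ_column_zero, Real.norm_eq_abs]
  refine (Finset.abs_sum_le_sum_abs _ _).trans ?_
  have : ∀ i ∈ (Finset.univ : Finset (Fin (r + 1))), |(-1) ^ (i : ℕ) *
      (Matrix.of fun i j => A (fun l => ((Fin.cons v b : Fin (r + 1) → Fin k → ℤ) j l : ℝ)) (e i))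
        i 0 *
      ((Matrix.of fun i j =>
        A (fun l => ((Fin.cons v b : Fin (r + 1) → Fin k → ℤ) j l : ℝ)) (e i)).submatrix
        i.succAbove Fin.succ).det| ≤ ‖A (fun l => (v l : ℝ))‖ * covol A b := by
    intro i _
    rw [abs_mul, abs_mul, abs_pow, abs_neg, abs_one, one_pow, one_mul]
    refine mul_le_mul (norm_le_pi_norm (A fun l => (v l : ℝ)) (e i)) ?_ (abs_nonneg _)
      (norm_nonneg _)
    exact abs_minorDet_le_covol A b (e ∘ i.succAbove)
  refine (Finset.sum_le_card_nsmul _ _ _ this).trans (le_of_eq ?_)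
  simp

lemma covol_le_of_mem_span {k m : ℕ} (A : (Fin k → ℝ) →ₗ[ℝ] (Fin k → ℝ))
    {b c : Fin m → Fin k → ℤ} (hc : LinearIndependent ℤ c)
    (h : ∀ j, c j ∈ Submodule.span ℤ (Set.range b)) : covol A b ≤ covol A c := by
  classical
  choose T hT using fun j => (Submodule.mem_span_range_iff_exists_fun ℤ).1 (h j)
  have hdet : (Matrix.of fun i j => T j i).det ≠ 0 := by
    intro h0
    obtain ⟨a, ha, hTa⟩ := Matrix.exists_mulVec_eq_zero_iff.2 h0
    refine ha (funext fun j => Fintype.linearIndependent_iff.1 hc a ?_ j)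
    simp only [← hT, Finset.smul_sum, smul_smul]
    rw [Finset.sum_comm]
    refine Finset.sum_eq_zero fun i _ => ?_
    rw [← Finset.sum_smul]
    have := congrFun hTa i
    rw [Matrix.mulVec, dotProduct] at this
    simp only [Matrix.of_apply, Pi.zero_apply] at this
    rw [show ∑ j, a j * T j i = 0 by
      rw [← this]; exact Finset.sum_congr rfl fun _ _ => mul_comm _ _,
      zero_smul]
  refine (pi_norm_le_iff_of_nonneg (norm_nonneg _)).2 fun e => ?_
  refine le_trans ?_ (abs_minorDet_le_covol A c e)
  have hmul : (Matrix.of fun i j => A (fun l => (c j l : ℝ)) (e i)) =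
      (Matrix.of fun i j => A (fun l => (b j l : ℝ)) (e i)) *
        (Int.castRingHom ℝ).mapMatrix (Matrix.of fun i j => T j i) := by
    ext i j
    rw [Matrix.mul_apply]
    simp only [Matrix.of_apply, RingHom.mapMatrix_apply, Matrix.map_apply, Int.coe_castRingHom]
    have h1 := sum_mul_map_intCast A b (fun l => (T j l : ℝ)) (e i)
    rw [show (fun l => (c j l : ℝ)) = fun l => ∑ x, (T j x : ℝ) * (b x l : ℝ) from by
      ext l; simp [← hT j], ← h1]
    exact Finset.sum_congr rfl fun _ _ => mul_comm _ _
  have : minorDet A c e = minorDet A b e * ((Matrix.of fun i j => T j i).det : ℝ) := by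
    rw [minorDet, hmul, Matrix.det_mul, ← RingHom.map_det]
    rfl
  rw [this, abs_mul, Real.norm_eq_abs]
  refine le_mul_of_one_le_right (abs_nonneg _) ?_
  exact_mod_cast Int.one_le_abs hdet

/-- The integer points of a rational subspace form a lattice of full rank in it. -/
lemma exists_lattice_basis {k : ℕ} (W : Submodule ℚ (Fin k → ℚ)) :
    ∃ b : Fin (Module.finrank ℚ W) → Fin k → ℤ, LinearIndependent ℤ b ∧
      (∀ v, intCastVec k v ∈ W ↔ v ∈ Submodule.span ℤ (Set.range b)) ∧
      Submodule.span ℚ (Set.range (intCastVec k ∘ b)) = W := by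
  classical
  set Z : Submodule ℤ (Fin k → ℤ) := (W.restrictScalars ℤ).comap (intCastVec k) with hZ
  set B := Module.finBasis ℤ Z
  have hli : LinearIndependent ℤ (fun i => (B i : Fin k → ℤ)) :=
    B.linearIndependent.map' Z.subtype (Submodule.ker_subtype Z)
  have hmem : ∀ v, intCastVec k v ∈ W ↔
      v ∈ Submodule.span ℤ (Set.range fun i => (B i : Fin k → ℤ)) := by
    intro v
    have h1 : Submodule.span ℤ (Set.range fun i => (B i : Fin k → ℤ)) = Z := by
      have := congrArg (Submodule.map Z.subtype) B.span_eq
      rw [Submodule.map_span, ← Set.range_comp, Submodule.map_top, Submodule.range_subtype] at this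
      exact this
    rw [h1]
    rfl
  have hspan : Submodule.span ℚ (Set.range (intCastVec k ∘ fun i => (B i : Fin k → ℤ))) = W := by
    refine le_antisymm (Submodule.span_le.2 ?_) fun w hw => ?_
    · rintro _ ⟨i, rfl⟩
      exact (B i).2
    · obtain ⟨N, hN⟩ := IsLocalization.exist_integer_multiples_of_finset
        (nonZeroDivisors ℤ) (Finset.univ.image w)
      have hN0 : (N : ℤ) ≠ 0 := nonZeroDivisors.coe_ne_zero N
      choose a ha using fun i => hN (w i) (Finset.mem_image_of_mem _ (Finset.mem_univ i))
      have hvec : intCastVec k a = (N : ℤ) • w := by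
        ext i
        have := ha i
        rw [intCastVec_apply, Pi.smul_apply]
        exact this
      have haW : intCastVec k a ∈ W := by
        rw [hvec]
        exact W.smul_of_tower_mem _ hw
      have h2 : intCastVec k a ∈ (Submodule.span ℚ
          (Set.range (intCastVec k ∘ fun i => (B i : Fin k → ℤ)))).restrictScalars ℤ := by
        have h3 := Submodule.mem_map_of_mem (f := intCastVec k) ((hmem a).1 haW)
        rw [Submodule.map_span, ← Set.range_comp] at h3
        exact Submodule.span_le_restrictScalars ℤ ℚ _ h3
      rw [Submodule.restrictScalars_mem, hvec, ← Int.cast_smul_eq_zsmul ℚ] at h2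
      exact (Submodule.smul_mem_iff _ (by exact_mod_cast hN0)).1 h2
  have hrank : Module.finrank ℤ Z = Module.finrank ℚ W := by
    rw [← hspan, finrank_span_eq_card (linearIndependent_intCastVec_iff.2 hli), Fintype.card_fin]
  refine ⟨fun i => B (Fin.cast hrank.symm i), hli.comp _ (Fin.cast_injective _), ?_, ?_⟩
  · intro v
    rw [hmem v]
    rw [show (fun i => (B (Fin.cast hrank.symm i) : Fin k → ℤ)) =
      (fun i => (B i : Fin k → ℤ)) ∘ finCongr hrank.symm from rfl,
      (finCongr hrank.symm).surjective.range_comp]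
  · conv_rhs => rw [← hspan]
    rw [show (intCastVec k ∘ fun i => (B (Fin.cast hrank.symm i) : Fin k → ℤ)) =
      (intCastVec k ∘ fun i => (B i : Fin k → ℤ)) ∘ finCongr hrank.symm from rfl,
      (finCongr hrank.symm).surjective.range_comp]

/-- A basis of the lattice of integer points of a rational subspace. -/
noncomputable def latticeBasis {k : ℕ} (W : Submodule ℚ (Fin k → ℚ)) :
    Fin (Module.finrank ℚ W) → Fin k → ℤ :=
  (exists_lattice_basis W).choose

lemma linearIndependent_latticeBasis {k : ℕ} (W : Submodule ℚ (Fin k → ℚ)) :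
    LinearIndependent ℤ (latticeBasis W) :=
  (exists_lattice_basis W).choose_spec.1

lemma mem_span_latticeBasis {k : ℕ} {W : Submodule ℚ (Fin k → ℚ)} {v : Fin k → ℤ} :
    v ∈ Submodule.span ℤ (Set.range (latticeBasis W)) ↔ intCastVec k v ∈ W :=
  ((exists_lattice_basis W).choose_spec.2.1 v).symm

lemma span_latticeBasis {k : ℕ} (W : Submodule ℚ (Fin k → ℚ)) :
    Submodule.span ℚ (Set.range (intCastVec k ∘ latticeBasis W)) = W :=
  (exists_lattice_basis W).choose_spec.2.2

lemma covol_le_covol_of_eq {k m m' : ℕ} (A : (Fin k → ℝ) →ₗ[ℝ] (Fin k → ℝ)) (hm : m = m')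
    {b : Fin m → Fin k → ℤ} {c : Fin m' → Fin k → ℤ} (hc : LinearIndependent ℤ c)
    (h : ∀ j, c j ∈ Submodule.span ℤ (Set.range b)) : covol A b ≤ covol A c := by
  subst hm
  exact covol_le_of_mem_span A hc h

lemma covol_sup_span_le {k : ℕ} (A : (Fin k → ℝ) →ₗ[ℝ] (Fin k → ℝ))
    {D : Submodule ℚ (Fin k → ℚ)} {v : Fin k → ℤ} (hv : intCastVec k v ∉ D) :
    covol A (latticeBasis (D ⊔ Submodule.span ℚ {intCastVec k v})) ≤
      (k + 1) * (‖A (fun l => (v l : ℝ))‖ * covol A (latticeBasis D)) := by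
  set c : Fin (Module.finrank ℚ D + 1) → Fin k → ℤ := Fin.cons v (latticeBasis D) with hcdef
  have hcomp : intCastVec k ∘ c = Fin.cons (intCastVec k v) (intCastVec k ∘ latticeBasis D) := by
    ext1 i
    refine Fin.cases ?_ (fun i => ?_) i <;> simp [hcdef]
  have hc : LinearIndependent ℤ c := by
    rw [← linearIndependent_intCastVec_iff, hcomp, linearIndependent_finCons, span_latticeBasis]
    exact ⟨linearIndependent_intCastVec_iff.2 (linearIndependent_latticeBasis D), hv⟩
  have hspan : Submodule.span ℚ (Set.range (intCastVec k ∘ c)) =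
      D ⊔ Submodule.span ℚ {intCastVec k v} := by
    rw [hcomp, Fin.range_cons, Submodule.span_insert, span_latticeBasis, sup_comm]
  have hrank : Module.finrank ℚ ↥(D ⊔ Submodule.span ℚ {intCastVec k v}) =
      Module.finrank ℚ D + 1 := by
    rw [← hspan, finrank_span_eq_card (linearIndependent_intCastVec_iff.2 hc), Fintype.card_fin]
  refine (covol_le_covol_of_eq A hrank hc fun j => ?_).trans
    ((covol_cons_le A _ v).trans ?_)
  · rw [mem_span_latticeBasis, ← hspan]
    exact Submodule.subset_span ⟨j, rfl⟩
  · have h1 : (Module.finrank ℚ D : ℝ) ≤ k := by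
      have := Submodule.finrank_le D
      rw [Module.finrank_fin_fun] at this
      exact_mod_cast this
    have h0 : 0 ≤ covol A (latticeBasis D) := norm_nonneg _
    gcongr

lemma card_le_of_isChain_submodule {k : ℕ} (C : Finset (Submodule ℚ (Fin k → ℚ)))
    (hC : IsChain (· ≤ ·) (C : Set (Submodule ℚ (Fin k → ℚ)))) : C.card ≤ k + 1 := by
  rw [← Finset.card_range (k + 1)]
  refine Finset.card_le_card_of_injOn (fun W => Module.finrank ℚ W) (fun W _ => ?_) ?_
  · have := Submodule.finrank_le W
    rw [Module.finrank_fin_fun] at this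
    simpa [Nat.lt_succ_iff] using this
  · intro W hW W' hW' heq
    rcases hC.total hW hW' with hle | hle
    · exact Submodule.eq_of_le_of_finrank_eq hle heq
    · exact (Submodule.eq_of_le_of_finrank_eq hle heq.symm).symm

lemma covol_latticeBasis_bot_le {k : ℕ} (A : (Fin k → ℝ) →ₗ[ℝ] (Fin k → ℝ)) :
    covol A (latticeBasis (⊥ : Submodule ℚ (Fin k → ℚ))) ≤ 1 := by
  refine (pi_norm_le_iff_of_nonneg zero_le_one).2 fun e => ?_
  have : IsEmpty (Fin (Module.finrank ℚ (⊥ : Submodule ℚ (Fin k → ℚ)))) := by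
    rw [finrank_bot]; infer_instance
  rw [minorDet, Matrix.det_isEmpty, norm_one]

/-- A marked point gives a lattice without short vectors. -/
lemma IsMarked.le_norm {k : ℕ} {A : ℝ → (Fin k → ℝ) →ₗ[ℝ] (Fin k → ℝ)} {ε ρ x : ℝ} (hερ : ε ≤ ρ)
    (hρ : ρ ≤ 1)
    (hx : IsMarked (fun (W : Submodule ℚ (Fin k → ℚ)) t => covol (A t) (latticeBasis W)) ε ρ
      Set.univ x) {v : Fin k → ℤ} (hv : v ≠ 0) :
    ε / (k + 1) ≤ ‖A x (fun l => (v l : ℝ))‖ := by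
  classical
  obtain ⟨C, -, hC, hCψ, hmax⟩ := hx
  obtain ⟨D, hvD, hψD, hD⟩ : ∃ D : Submodule ℚ (Fin k → ℚ), intCastVec k v ∉ D ∧
      covol (A x) (latticeBasis D) ≤ 1 ∧
      ∀ c ∈ C, c ≤ D ∨ D ⊔ Submodule.span ℚ {intCastVec k v} ≤ c := by
    by_cases hne : (C.filter fun c => intCastVec k v ∉ c).Nonempty
    · obtain ⟨D, hD⟩ := Finset.exists_maximal hne
      obtain ⟨hDC, hvD⟩ := Finset.mem_filter.1 hD.1
      refine ⟨D, hvD, (hCψ D hDC).2.le.trans hρ, fun c hc => ?_⟩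
      by_cases hvc : intCastVec k v ∈ c
      · refine Or.inr (sup_le ?_ (by simpa using hvc))
        exact (hC.total hDC hc).resolve_right fun hle => hvD (hle hvc)
      · rcases hC.total hc hDC with hle | hle
        · exact Or.inl hle
        · exact Or.inl (hD.2 (Finset.mem_filter.2 ⟨hc, hvc⟩) hle)
    · refine ⟨⊥, ?_, covol_latticeBasis_bot_le _, fun c hc => Or.inr ?_⟩
      · rw [Submodule.mem_bot]
        exact fun h0 => hv (intCastVec_injective k (by rw [h0, map_zero]))
      · have : intCastVec k v ∈ c := by
          by_contra hvc
          exact hne ⟨c, Finset.mem_filter.2 ⟨hc, hvc⟩⟩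
        simpa using this
  set W' := D ⊔ Submodule.span ℚ {intCastVec k v}
  have hψW : ε ≤ covol (A x) (latticeBasis W') := by
    by_cases hW : W' ∈ C
    · exact (hCψ W' hW).1
    · refine hερ.trans (hmax W' (Set.mem_univ _) hW fun c hc => ?_)
      rcases hD c hc with hle | hle
      · exact Or.inr (hle.trans le_sup_left)
      · exact Or.inl hle
  have h1 := hψW.trans (covol_sup_span_le (A x) hvD)
  have h2 : ‖A x (fun l => (v l : ℝ))‖ * covol (A x) (latticeBasis D) ≤
      ‖A x (fun l => (v l : ℝ))‖ := mul_le_of_le_one_right (norm_nonneg _) hψD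
  rw [div_le_iff₀ (by positivity)]
  nlinarith

/-- The linear map sending a vector `(q₀, q)` to `(Q ^ n * (q₀ + q · y), q / Q)`. -/
noncomputable def approxMap {n : ℕ} (Q : ℝ) (y : Fin n → ℝ) :
    (Fin (n + 1) → ℝ) →ₗ[ℝ] (Fin (n + 1) → ℝ) where
  toFun v := Fin.cons (Q ^ n * (v 0 + ∑ i, v i.succ * y i)) fun i => v i.succ / Q
  map_add' v w := by
    ext i
    refine Fin.cases ?_ (fun i => ?_) i
    · simp only [Fin.cons_zero, Pi.add_apply, add_mul, Finset.sum_add_distrib]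
      ring
    · simp [add_div]
  map_smul' a v := by
    ext i
    refine Fin.cases ?_ (fun i => ?_) i
    · simp only [Fin.cons_zero, Pi.smul_apply, smul_eq_mul, RingHom.id_apply, mul_assoc,
        ← Finset.mul_sum]
      ring
    · simp [mul_div_assoc]

lemma approxMap_zero {n : ℕ} (Q : ℝ) (y : Fin n → ℝ) (v : Fin (n + 1) → ℝ) :
    approxMap Q y v 0 = Q ^ n * (v 0 + ∑ i, v i.succ * y i) := rfl

lemma approxMap_succ {n : ℕ} (Q : ℝ) (y : Fin n → ℝ) (v : Fin (n + 1) → ℝ) (i : Fin n) :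
    approxMap Q y v i.succ = v i.succ / Q := rfl

lemma approxMap_injective {n : ℕ} {Q : ℝ} (hQ : 0 < Q) (y : Fin n → ℝ) :
    Function.Injective (approxMap Q y) := by
  rw [injective_iff_map_eq_zero]
  intro v hv
  have hs : ∀ i : Fin n, v i.succ = 0 := by
    intro i
    have := congrFun hv i.succ
    rw [approxMap_succ, Pi.zero_apply, div_eq_zero_iff] at this
    exact this.resolve_right hQ.ne'
  have h0 : v 0 = 0 := by
    have := congrFun hv 0
    rw [approxMap_zero] at this
    simpa [hs, hQ.ne'] using this
  ext i
  exact Fin.cases h0 hs i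

lemma exists_affineMap_eq_minorDet_approxMap {n r : ℕ} (Q : ℝ) (b : Fin r → Fin (n + 1) → ℤ)
    (e : Fin r → Fin (n + 1)) :
    ∃ g : (Fin n → ℝ) →ᵃ[ℝ] ℝ, ∀ y, minorDet (approxMap Q y) b e = g y := by
  classical
  by_cases h0 : ∃ i, e i = 0
  swap
  · refine ⟨AffineMap.const ℝ _ (minorDet (approxMap Q 0) b e), fun y => ?_⟩
    rw [AffineMap.const_apply, minorDet, minorDet]
    congr 1
    ext i j
    obtain ⟨l, hl⟩ := Fin.exists_succ_eq.2 (fun h => h0 ⟨i, h⟩)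
    simp [← hl, approxMap_succ]
  obtain ⟨i₀, hi₀⟩ := h0
  by_cases h1 : ∃ i, i ≠ i₀ ∧ e i = 0
  · obtain ⟨i₁, hne, hi₁⟩ := h1
    refine ⟨AffineMap.const ℝ _ 0, fun y => ?_⟩
    rw [AffineMap.const_apply, minorDet]
    refine Matrix.det_zero_of_row_eq hne ?_
    ext j
    simp [hi₀, hi₁]
  push Not at h1
  set R : (Fin n → ℝ) →ᵃ[ℝ] (Fin r → ℝ) :=
    (Matrix.mulVecLin (Matrix.of fun j l => Q ^ n * (b j (Fin.succ l) : ℝ))).toAffineMap +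
      AffineMap.const ℝ _ fun j => Q ^ n * (b j 0 : ℝ) with hR
  set M := Matrix.of fun i j => approxMap Q (0 : Fin n → ℝ) (fun l => (b j l : ℝ)) (e i) with hM
  refine ⟨(Matrix.detRowAlternating.toMultilinearMap.toLinearMap M i₀).toAffineMap.comp R,
    fun y => ?_⟩
  rw [minorDet, AffineMap.comp_apply]
  change _ = Matrix.det (M.updateRow i₀ (R y))
  congr 1
  ext i j
  by_cases hi : i = i₀
  · subst hi
    rw [Matrix.updateRow_self]
    simp only [Matrix.of_apply, hi₀, approxMap_zero, hR]
    simp [Matrix.mulVec, dotProduct, mul_add, Finset.mul_sum, mul_assoc, add_comm]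
  · obtain ⟨l, hl⟩ := Fin.exists_succ_eq.2 (h1 i hi)
    rw [Matrix.updateRow_ne hi]
    simp [hM, ← hl, approxMap_succ]

/-- The vector `(1, u)`. -/
def homogenize {s : ℕ} (u : Fin s → ℝ) : Fin (s + 1) → ℝ := Fin.cons 1 u

lemma exists_sum_homogenize_eq {s : ℕ} (g : (Fin s → ℝ) →ᵃ[ℝ] ℝ) :
    ∃ c : Fin (s + 1) → ℝ, ∀ u, g u = ∑ j, c j * homogenize u j := by
  classical
  refine ⟨Fin.cons (g 0) fun j => g.linear (Pi.single j 1), fun u => ?_⟩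
  rw [Fin.sum_univ_succ]
  simp only [homogenize, Fin.cons_zero, Fin.cons_succ, mul_one]
  have h1 : g u = g.linear u + g 0 := by
    have := g.map_vadd 0 u
    simpa using this
  rw [h1, add_comm, LinearMap.pi_apply_eq_sum_univ g.linear u]
  congr 1
  refine Finset.sum_congr rfl fun j _ => ?_
  rw [smul_eq_mul, mul_comm]
  congr 2
  ext l
  simp [Pi.single_apply, eq_comm]

lemma exists_le_abs_minorDet {k r : ℕ} {A : (Fin k → ℝ) →ₗ[ℝ] (Fin k → ℝ)}
    {b : Fin r → Fin k → ℤ} {ρ : ℝ} (hρ : 0 < ρ) (h : ρ ≤ covol A b) :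
    ∃ e, ρ ≤ |minorDet A b e| := by
  by_contra! hlt
  exact absurd ((pi_norm_lt_iff hρ).2 fun e => hlt e) (not_lt.2 h)

lemma exists_le_norm_approxMap_of_not_isSingularVec {n : ℕ} {y : Fin n → ℝ}
    (hy : ¬ IsSingularVec y) :
    ∃ ε : ℝ, 0 < ε ∧ ε ≤ 1 ∧ ∀ N : ℝ, ∃ Q ≥ N, 1 ≤ Q ∧ ∀ v : Fin (n + 1) → ℤ, v ≠ 0 →
      ε ≤ ‖approxMap Q y (fun l => (v l : ℝ))‖ := by
  unfold IsSingularVec at hy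
  push Not at hy
  obtain ⟨c, hc, hy⟩ := hy
  refine ⟨min c 1, lt_min hc one_pos, min_le_right _ _, fun N => ?_⟩
  obtain ⟨Q, hQ, hyQ⟩ := hy (max N 1) (by positivity)
  have hQ1 : 1 ≤ Q := (le_max_right _ _).trans hQ
  have hQpos : 0 < Q := by linarith
  refine ⟨Q, (le_max_left _ _).trans hQ, hQ1, fun v hv => ?_⟩
  have hQn : 1 ≤ Q ^ n := one_le_pow₀ hQ1
  have h0 := norm_le_pi_norm (approxMap Q y fun l => (v l : ℝ)) 0
  rw [approxMap_zero, norm_mul, Real.norm_eq_abs, Real.norm_eq_abs, abs_of_pos (by positivity)]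
    at h0
  by_cases hq : (fun i : Fin n => v i.succ) = 0
  · have hq' : ∀ i : Fin n, v i.succ = 0 := congrFun hq
    have hv0 : v 0 ≠ 0 := fun h => hv (by ext i; exact Fin.cases h hq' i)
    have h1 : (1 : ℝ) ≤ |(v 0 : ℝ)| := by exact_mod_cast Int.one_le_abs hv0
    simp only [hq', Int.cast_zero, zero_mul, Finset.sum_const_zero, add_zero] at h0
    refine (min_le_right _ _).trans (le_trans ?_ h0)
    nlinarith
  · by_cases hlt : |(∑ i, (v i.succ : ℝ) * y i) + (v 0 : ℝ)| < c / Q ^ n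
    · obtain ⟨i, hi⟩ := hyQ _ hq (v 0) hlt
      have h1 := norm_le_pi_norm (approxMap Q y fun l => (v l : ℝ)) i.succ
      rw [approxMap_succ, norm_div, Real.norm_eq_abs, Real.norm_eq_abs, abs_of_pos hQpos] at h1
      exact (min_le_right _ _).trans (le_trans ((one_le_div hQpos).2 hi.le) h1)
    · rw [not_lt, div_le_iff₀ (by positivity), add_comm, mul_comm] at hlt
      exact (min_le_left _ _).trans (hlt.trans h0)

lemma IsSingularVec.exists_norm_approxMap_lt {n : ℕ} {y : Fin n → ℝ} (hy : IsSingularVec y)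
    {δ : ℝ} (hδ : 0 < δ) :
    ∃ N : ℕ, ∀ Q : ℝ, N ≤ Q → ∃ v : Fin (n + 1) → ℤ, v ≠ 0 ∧
      ‖approxMap Q y (fun l => (v l : ℝ))‖ < δ := by
  obtain ⟨Q₀, hQ₀, hy⟩ := hy ((δ / 2) ^ n * δ) (by positivity)
  obtain ⟨N, hN⟩ := exists_nat_ge (Q₀ / (δ / 2))
  refine ⟨N, fun Q hQ => ?_⟩
  have hle : Q₀ ≤ δ / 2 * Q := by
    rw [mul_comm, ← div_le_iff₀ (by positivity)]
    exact hN.trans hQ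
  have hQpos : 0 < Q := by
    have : 0 < δ / 2 * Q := hQ₀.trans_le hle
    exact (mul_pos_iff_of_pos_left (by positivity)).1 this
  obtain ⟨q, hq, q₀, hlt, hqQ⟩ := hy _ hle
  refine ⟨Fin.cons q₀ q, fun h => hq ?_, (pi_norm_lt_iff hδ).2 fun i => ?_⟩
  · ext i
    simpa using congrFun h i.succ
  · refine Fin.cases ?_ (fun i => ?_) i
    · rw [approxMap_zero, norm_mul, Real.norm_eq_abs, Real.norm_eq_abs, abs_of_pos (by positivity)]
      simp only [Fin.cons_zero, Fin.cons_succ]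
      rw [mul_pow, mul_div_mul_left _ _ (by positivity), lt_div_iff₀ (by positivity)] at hlt
      rw [add_comm, mul_comm]
      exact hlt
    · rw [approxMap_succ, norm_div, Real.norm_eq_abs, Real.norm_eq_abs, abs_of_pos hQpos,
        div_lt_iff₀ hQpos, Fin.cons_succ]
      have := hqQ i
      nlinarith

lemma exists_mul_abs_sum_le {ι κ : Type*} [Fintype κ] {w : ι → κ → ℝ}
    (hw : ∀ c : κ → ℝ, (∀ i, ∑ j, c j * w i j = 0) → c = 0) [Nonempty ι] (w₀ : κ → ℝ) :
    ∃ K : ℝ, 0 < K ∧ ∀ c : κ → ℝ, ∃ i, K * |∑ j, c j * w₀ j| ≤ |∑ j, c j * w i j| := by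
  classical
  obtain ⟨e, he⟩ := exists_linearIndependent_comp_of_forall hw
  have hmem : w₀ ∈ Submodule.span ℝ (Set.range (w ∘ e)) := by
    rw [he.span_eq_top_of_card_eq_finrank' (by simp)]
    exact Submodule.mem_top
  obtain ⟨a, ha⟩ := (Submodule.mem_span_range_iff_exists_fun ℝ).1 hmem
  have hS : 0 ≤ ∑ l, |a l| := Finset.sum_nonneg fun _ _ => abs_nonneg _
  refine ⟨1 / (1 + ∑ l, |a l|), by positivity, fun c => ?_⟩
  by_contra! hlt
  set X := |∑ j, c j * w₀ j| with hX
  have hXpos : 0 < X := by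
    have := (abs_nonneg _).trans_lt (hlt (Classical.arbitrary ι))
    exact (mul_pos_iff_of_pos_left (by positivity)).1 this
  have hsum : ∑ j, c j * w₀ j = ∑ l, a l * ∑ j, c j * w (e l) j := by
    simp only [← ha, Finset.sum_apply, Pi.smul_apply, smul_eq_mul, Finset.mul_sum,
      Function.comp_apply]
    rw [Finset.sum_comm]
    exact Finset.sum_congr rfl fun _ _ => Finset.sum_congr rfl fun _ _ => by ring
  have hle : X ≤ (∑ l, |a l|) * (1 / (1 + ∑ l, |a l|) * X) := by
    rw [Finset.sum_mul]
    refine ((congrArg _ hsum).trans_le (Finset.abs_sum_le_sum_abs _ _)).trans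
      (Finset.sum_le_sum fun l _ => ?_)
    rw [abs_mul]
    exact mul_le_mul_of_nonneg_left (hlt (e l)).le (abs_nonneg _)
  have : (∑ l, |a l|) * (1 / (1 + ∑ l, |a l|) * X) = X - X / (1 + ∑ l, |a l|) := by
    field_simp
    ring
  rw [this] at hle
  have : 0 < X / (1 + ∑ l, |a l|) := by positivity
  linarith

lemma analyticOnNhd_homogenize {E : Type*} [NormedAddCommGroup E] [NormedSpace ℝ E] {s : ℕ}
    {u : E → Fin s → ℝ} {V : Set E} (hu : AnalyticOnNhd ℝ u V) (j : Fin (s + 1)) :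
    AnalyticOnNhd ℝ (fun t => homogenize (u t) j) V := by
  refine Fin.cases ?_ (fun j => ?_) j
  · exact analyticOnNhd_const
  · exact fun t ht =>
      ((ContinuousLinearMap.proj (R := ℝ) (φ := fun _ : Fin s => ℝ) j).analyticAt _).comp (hu t ht)

lemma exists_minorDet_approxMap_eq_sum {s n r : ℕ} (h : (Fin s → ℝ) →ᵃ[ℝ] (Fin n → ℝ)) (Q : ℝ)
    (b : Fin r → Fin (n + 1) → ℤ) (e : Fin r → Fin (n + 1)) :
    ∃ c : Fin (s + 1) → ℝ, ∀ u, minorDet (approxMap Q (h u)) b e = ∑ j, c j * homogenize u j := by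
  obtain ⟨g, hg⟩ := exists_affineMap_eq_minorDet_approxMap Q b e
  obtain ⟨c, hc⟩ := exists_sum_homogenize_eq (g.comp h)
  exact ⟨c, fun u => by rw [hg, ← hc]; rfl⟩

lemma continuous_covol_approxMap {s n r : ℕ} (h : (Fin s → ℝ) →ᵃ[ℝ] (Fin n → ℝ)) (Q : ℝ)
    (b : Fin r → Fin (n + 1) → ℤ) : Continuous fun u => covol (approxMap Q (h u)) b := by
  refine continuous_norm.comp (continuous_pi fun e => ?_)
  obtain ⟨g, hg⟩ := exists_affineMap_eq_minorDet_approxMap Q b e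
  simp only [hg]
  exact g.continuous_of_finiteDimensional.comp h.continuous_of_finiteDimensional

/-- Nonsingularity of one point of an affine subspace propagates to almost every point of a
nondegenerate analytic curve in that subspace. -/
theorem ae_not_isSingularVec_of_curve {s n : ℕ} (h : (Fin s → ℝ) →ᵃ[ℝ] (Fin n → ℝ))
    {u₀ : Fin s → ℝ} (hu₀ : ¬ IsSingularVec (h u₀)) {u : ℝ → Fin s → ℝ}
    (hu : AnalyticOnNhd ℝ u Set.univ)
    (hnd : ∀ c : Fin (s + 1) → ℝ, (∀ t, ∑ j, c j * homogenize (u t) j = 0) → c = 0) :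
    ∀ᵐ t, ¬ IsSingularVec (h (u t)) := by
  have hw : ∀ j, AnalyticOnNhd ℝ (fun t => homogenize (u t) j) Set.univ :=
    analyticOnNhd_homogenize hu
  have hucont : Continuous u := continuousOn_univ.1 hu.continuousOn
  rw [ae_iff]
  simp only [not_not]
  refine measure_null_of_locally_null _ fun t₀ _ => ?_
  obtain ⟨τ, hτ, hgood⟩ := exists_uniformly_good (w := fun t => homogenize (u t)) hw hnd t₀
  have hpq : t₀ - τ / 2 < t₀ + τ / 2 := by linarith
  have hsub : Set.Ico (t₀ - τ / 2) (t₀ + τ / 2) ⊆ Metric.ball t₀ τ := by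
    intro t ht
    rw [Metric.mem_ball, Real.dist_eq, abs_lt]
    constructor <;> linarith [ht.1, ht.2]
  set J := Set.Ico (t₀ - τ / 2) (t₀ + τ / 2) with hJ
  have hJnhds : J ∈ nhds t₀ := Ico_mem_nhds (by linarith) (by linarith)
  refine ⟨_, inter_mem self_mem_nhdsWithin (mem_nhdsWithin_of_mem_nhds hJnhds), ?_⟩
  have : Nonempty J := ⟨⟨t₀, mem_of_mem_nhds hJnhds⟩⟩
  obtain ⟨K, hK, hKle⟩ := exists_mul_abs_sum_le (w := fun t : J => homogenize (u t)) (fun c hc => by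
    refine hnd c fun t => ?_
    have han : AnalyticOnNhd ℝ (fun t => ∑ j, c j * homogenize (u t) j) Set.univ :=
      Finset.analyticOnNhd_fun_sum _ fun j _ => analyticOnNhd_const.mul (hw j)
    have := han.eq_of_eventuallyEq (g := fun _ => 0) analyticOnNhd_const (z₀ := t₀)
      (by filter_upwards [hJnhds] with t ht using hc ⟨t, ht⟩)
    exact congrFun this t) (homogenize u₀)
  obtain ⟨ε₀, hε₀, hε₀1, hlarge⟩ := exists_le_norm_approxMap_of_not_isSingularVec hu₀
  set ρ₀ := (ε₀ / ((n + 1 : ℕ) + 1)) ^ (n + 1) with hρ₀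
  have hρ₀pos : 0 < ρ₀ := by positivity
  set ρ := min (K * ρ₀) 1 with hρ
  have hρpos : 0 < ρ := lt_min (by positivity) one_pos
  have hbound : ∀ η : ℝ, 0 < η → volume ({t | IsSingularVec (h (u t))} ∩ J) ≤
      ENNReal.ofReal (4 ^ (n + 1 + 1) * η * (t₀ + τ / 2 - (t₀ - τ / 2))) := by
    intro η hη
    obtain ⟨ε, hε, hε1, hgood⟩ := hgood η hη
    have hερ : ε * ρ ≤ ρ := mul_le_of_le_one_left hρpos.le hε1
    set δ := ε * ρ / ((n + 1 : ℕ) + 1) with hδ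
    have hδpos : 0 < δ := by positivity
    set E : ℕ → Set ℝ := fun N => {t ∈ J | ∀ Q : ℝ, N ≤ Q → ∃ v : Fin (n + 1) → ℤ, v ≠ 0 ∧
      ‖approxMap Q (h (u t)) (fun l => (v l : ℝ))‖ < δ} with hE
    have hmono : Monotone E := fun N N' hNN t ht =>
      ⟨ht.1, fun Q hQ => ht.2 Q (le_trans (by exact_mod_cast hNN) hQ)⟩
    have hcover : {t | IsSingularVec (h (u t))} ∩ J ⊆ ⋃ N, E N := by
      rintro t ⟨ht, htJ⟩
      obtain ⟨N, hN⟩ := IsSingularVec.exists_norm_approxMap_lt ht hδpos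
      exact Set.mem_iUnion.2 ⟨N, htJ, hN⟩
    refine (measure_mono hcover).trans ?_
    rw [hmono.measure_iUnion]
    refine iSup_le fun N => ?_
    obtain ⟨Q, hNQ, hQ1, hQ⟩ := hlarge N
    set ψ : Submodule ℚ (Fin (n + 1) → ℚ) → ℝ → ℝ := fun W t =>
      covol (approxMap Q (h (u t))) (latticeBasis W) with hψ
    have hEN : E N ⊆ {t ∈ J | ¬ IsMarked ψ (ε * ρ) ρ Set.univ t} := by
      refine fun t ht => ⟨ht.1, fun hm => ?_⟩
      obtain ⟨v, hv, hlt⟩ := ht.2 Q hNQ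
      exact absurd hlt (not_lt.2 (IsMarked.le_norm (A := fun t => approxMap Q (h (u t))) hερ
        (min_le_right _ _) hm hv))
    refine (measure_mono hEN).trans ?_
    refine volume_not_isMarked_le hη.le (I := Metric.ball t₀ τ)
      (fun W => (continuous_covol_approxMap h Q _).comp hucont) ?_ (n + 1 + 1) Set.univ
      (fun C _ hC => card_le_of_isChain_submodule C hC) _ _ hpq hsub ?_
    · rintro W p q hpq hsub ⟨x, hx, hxρ⟩
      obtain ⟨e, he⟩ := exists_le_abs_minorDet hρpos hxρ
      obtain ⟨c, hc⟩ := exists_minorDet_approxMap_eq_sum h Q (latticeBasis W) e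
      refine (measure_mono fun t ht => ?_).trans
        (hgood c p q hpq hsub ρ hρpos ⟨x, hx, by rwa [hc] at he⟩)
      refine ⟨ht.1, ?_⟩
      rw [← hc]
      exact (abs_minorDet_le_covol _ _ _).trans_lt ht.2
    · intro W _
      have hrank : Module.finrank ℚ W ≤ n + 1 := by
        have := Submodule.finrank_le W
        rwa [Module.finrank_fin_fun] at this
      have hle := le_covol_of_forall_le_norm (approxMap_injective (by linarith) _)
        (linearIndependent_latticeBasis W) hrank hε₀ hε₀1 hQ
      obtain ⟨e, he⟩ := exists_le_abs_minorDet hρ₀pos hle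
      obtain ⟨c, hc⟩ := exists_minorDet_approxMap_eq_sum h Q (latticeBasis W) e
      rw [hc] at he
      obtain ⟨⟨t, ht⟩, hKt⟩ := hKle c
      refine ⟨t, ht, (min_le_left _ _).trans ?_⟩
      refine le_trans ?_ (abs_minorDet_le_covol _ _ e)
      rw [hc]
      exact (mul_le_mul_of_nonneg_left he hK.le).trans hKt
  refine le_antisymm (ENNReal.le_of_forall_pos_le_add fun δ hδ _ => ?_) zero_le
  have hδ' : (0 : ℝ) < δ := hδ
  refine (hbound (δ / (4 ^ (n + 1 + 1) * τ)) (by positivity)).trans (le_of_eq ?_)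
  rw [zero_add, show 4 ^ (n + 1 + 1) * ((δ : ℝ) / (4 ^ (n + 1 + 1) * τ)) *
    (t₀ + τ / 2 - (t₀ - τ / 2)) = δ by field_simp; ring, ENNReal.ofReal_coe_nnreal]

lemma isSingularVec_iff_nat {n : ℕ} (x : Fin n → ℝ) : IsSingularVec x ↔
    ∀ k : ℕ, ∃ N : ℕ, ∀ M : ℕ, N ≤ M → ∃ q : Fin n → ℤ, q ≠ 0 ∧ ∃ q₀ : ℤ,
      |(∑ i, (q i : ℝ) * x i) + (q₀ : ℝ)| < 1 / ((k : ℝ) + 1) / (M : ℝ) ^ n ∧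
        ∀ i, |(q i : ℝ)| ≤ M := by
  constructor
  · intro hx k
    obtain ⟨Q₀, -, hQ₀⟩ := hx (1 / ((k : ℝ) + 1)) (by positivity)
    obtain ⟨N, hN⟩ := exists_nat_ge Q₀
    exact ⟨N, fun M hM => hQ₀ M (hN.trans (by exact_mod_cast hM))⟩
  · intro hx c hc
    obtain ⟨k, hk⟩ := exists_nat_ge (2 ^ n / c)
    obtain ⟨N, hN⟩ := hx k
    refine ⟨N + 1, by positivity, fun Q hQ => ?_⟩
    have hQ0 : 0 ≤ Q := le_trans (by positivity) hQ
    obtain ⟨q, hq, q₀, hlt, hqM⟩ := hN ⌊Q⌋₊ (Nat.le_floor (by linarith))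
    have hM1 : (1 : ℝ) ≤ ⌊Q⌋₊ := by
      have : 1 ≤ ⌊Q⌋₊ := Nat.le_floor (by
        have : (0 : ℝ) ≤ N := Nat.cast_nonneg N
        push_cast
        linarith)
      exact_mod_cast this
    refine ⟨q, hq, q₀, hlt.trans_le ?_, fun i => (hqM i).trans (Nat.floor_le hQ0)⟩
    have hQM : Q ≤ 2 * ⌊Q⌋₊ := by linarith [Nat.lt_floor_add_one Q]
    have hQpos : 0 < Q := by
      have : (0 : ℝ) ≤ N := Nat.cast_nonneg N
      linarith
    have hpow : Q ^ n ≤ 2 ^ n * (⌊Q⌋₊ : ℝ) ^ n := by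
      rw [← mul_pow]
      exact pow_le_pow_left₀ hQ0 hQM n
    rw [div_le_iff₀ hc] at hk
    rw [div_div, div_le_div_iff₀ (by positivity) (by positivity), one_mul]
    refine hpow.trans ?_
    rw [← mul_assoc]
    refine mul_le_mul_of_nonneg_right ?_ (by positivity)
    nlinarith

lemma measurableSet_isSingularVec (n : ℕ) : MeasurableSet {x : Fin n → ℝ | IsSingularVec x} := by
  simp only [isSingularVec_iff_nat]
  simp only [Set.ofPred_forall, Set.ofPred_exists, Set.ofPred_and]
  refine MeasurableSet.iInter fun k => MeasurableSet.iUnion fun N => MeasurableSet.iInter fun M =>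
    MeasurableSet.iInter fun _ => MeasurableSet.iUnion fun q =>
      (MeasurableSet.iInter fun _ => MeasurableSet.const _).inter <|
        MeasurableSet.iUnion fun q₀ => MeasurableSet.inter ?_
          (MeasurableSet.iInter fun _ => MeasurableSet.const _)
  exact measurableSet_lt (by fun_prop) measurable_const

lemma eq_zero_of_linearIndependent_of_forall {K κ : Type*} [Field K] [Fintype κ] {v : κ → κ → K}
    (hv : LinearIndependent K v) {c : κ → K} (hc : ∀ i, ∑ j, c j * v i j = 0) : c = 0 := by
  classical
  have hker : (⊤ : Submodule K (κ → K)) ≤ LinearMap.ker (dotProductBilin K K c) := by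
    rw [← hv.span_eq_top_of_card_eq_finrank' (by simp), Submodule.span_le]
    rintro _ ⟨i, rfl⟩
    exact hc i
  ext j
  have : dotProduct c (Pi.single j 1) = 0 := hker (Submodule.mem_top (x := Pi.single j 1))
  simpa using this

/-- There is an analytic curve inside a closed ball of a sup norm passing through its centre at
time `0` and through prescribed points at positive integer times. -/
lemma exists_analytic_curve {d m : ℕ} (x₀ : Fin d → ℝ) {r : ℝ} (hr : 0 < r)
    (p : Fin m → Fin d → ℝ) (hp : ∀ j, p j ∈ Metric.closedBall x₀ r) :
    ∃ γ : ℝ → Fin d → ℝ, AnalyticOnNhd ℝ γ Set.univ ∧ (∀ t, γ t ∈ Metric.closedBall x₀ r) ∧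
      γ 0 = x₀ ∧ ∀ j, ∃ t, γ t = p j := by
  classical
  set node : Fin (m + 1) → ℝ := fun j => (j : ℕ) with hnode
  have hinj : Set.InjOn node (Finset.univ : Finset (Fin (m + 1))) := fun i _ j _ hij =>
    Fin.ext (Nat.cast_injective hij)
  set P : Fin d → Polynomial ℝ := fun i => Lagrange.interpolate Finset.univ node
    (Fin.cons 0 fun j => Real.arcsin ((p j i - x₀ i) / r)) with hP
  have heval : ∀ i j, (P i).eval (node j) =
      (Fin.cons 0 fun j => Real.arcsin ((p j i - x₀ i) / r) : Fin (m + 1) → ℝ) j := fun i j =>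
    Lagrange.eval_interpolate_at_node _ hinj (Finset.mem_univ j)
  refine ⟨fun t i => x₀ i + r * Real.sin ((P i).eval t), ?_, ?_, ?_, ?_⟩
  · rw [analyticOnNhd_pi_iff]
    intro i t _
    exact analyticAt_const.add (analyticAt_const.mul (Real.analyticAt_sin.comp
      (AnalyticOnNhd.eval_polynomial (P i) t (Set.mem_univ t))))
  · intro t
    rw [mem_closedBall_iff_norm, pi_norm_le_iff_of_nonneg hr.le]
    intro i
    simp only [Pi.sub_apply, add_sub_cancel_left, norm_mul, Real.norm_eq_abs, abs_of_pos hr]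
    exact mul_le_of_le_one_right hr.le (Real.abs_sin_le_one _)
  · ext i
    have := heval i 0
    simp only [hnode, Fin.val_zero, Nat.cast_zero, Fin.cons_zero] at this
    simp [this]
  · refine fun j => ⟨node j.succ, funext fun i => ?_⟩
    have hle : |(p j i - x₀ i) / r| ≤ 1 := by
      rw [abs_div, abs_of_pos hr, div_le_one hr]
      exact (norm_le_pi_norm (p j - x₀) i).trans (mem_closedBall_iff_norm.1 (hp j))
    change x₀ i + r * Real.sin ((P i).eval (node j.succ)) = p j i
    rw [heval, Fin.cons_succ, Real.sin_arcsin (abs_le.1 hle).1 (abs_le.1 hle).2]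
    field_simp
    ring

/-- Nonsingularity of one point of an affine subspace propagates to almost every point of the image
of a nondegenerate analytic map into that subspace. -/
theorem ae_not_isSingularVec_of_analyticOnNhd {s n d : ℕ} (h : (Fin s → ℝ) →ᵃ[ℝ] (Fin n → ℝ))
    {u₀ : Fin s → ℝ} (hu₀ : ¬ IsSingularVec (h u₀)) {U : Set (Fin d → ℝ)} (hU : IsOpen U)
    {F : (Fin d → ℝ) → Fin s → ℝ} (hF : AnalyticOnNhd ℝ F U)
    (hnd : ∀ x₀ r, 0 < r → Metric.ball x₀ r ⊆ U → ∀ c : Fin (s + 1) → ℝ,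
      (∀ x ∈ Metric.ball x₀ r, ∑ j, c j * homogenize (F x) j = 0) → c = 0) :
    ∀ᵐ x, x ∈ U → ¬ IsSingularVec (h (F x)) := by
  classical
  rw [ae_iff]
  refine measure_null_of_locally_null _ fun x₀ hx₀ => ?_
  have hx₀U : x₀ ∈ U := by
    by_contra hx
    exact hx₀ fun h => absurd h hx
  obtain ⟨R, hR, hRU⟩ := Metric.isOpen_iff.1 hU x₀ hx₀U
  have hr : 0 < R / 2 := by positivity
  have hsubU : ∀ z ∈ Metric.ball (0 : Fin d → ℝ) (R / 2), ∀ y ∈ Metric.closedBall x₀ (R / 2),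
      z + y ∈ U := by
    intro z hz y hy
    refine hRU ?_
    rw [mem_ball_iff_norm, add_sub_assoc]
    rw [mem_ball_zero_iff] at hz
    rw [mem_closedBall_iff_norm] at hy
    linarith [norm_add_le z (y - x₀)]
  obtain ⟨e, he⟩ := exists_linearIndependent_comp_of_forall
    (v := fun x : Metric.ball x₀ (R / 2) => homogenize (F x)) (fun c hc =>
      hnd x₀ (R / 2) hr ((Metric.ball_subset_ball (by linarith)).trans hRU) c
        fun x hx => hc ⟨x, hx⟩)
  obtain ⟨γ, hγ, hγball, hγ0, hγp⟩ := exists_analytic_curve x₀ hr (fun j => (e j : Fin d → ℝ))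
    fun j => Metric.ball_subset_closedBall (e j).2
  have hLI : ∀ᶠ z in nhds (0 : Fin d → ℝ),
      LinearIndependent ℝ fun j => homogenize (F (z + e j)) := by
    have hcont : ContinuousAt (fun (z : Fin d → ℝ) j => homogenize (F (z + e j))) 0 := by
      refine continuousAt_pi.2 fun j => continuousAt_pi.2 fun i => ?_
      have hmem : (0 : Fin d → ℝ) + e j ∈ U := hsubU 0 (Metric.mem_ball_self hr) _
        (Metric.ball_subset_closedBall (e j).2)
      have h1 := (analyticOnNhd_homogenize hF i _ hmem).continuousAt
      exact ContinuousAt.comp (f := fun z : Fin d → ℝ => z + e j) h1 (by fun_prop)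
    refine hcont.eventually_mem (isOpen_setOfPred_linearIndependent.mem_nhds ?_)
    simpa [Function.comp_def] using he
  obtain ⟨r', hr', hball⟩ := Metric.eventually_nhds_iff_ball.1
    (hLI.and (Metric.ball_mem_nhds 0 hr))
  set G : (Fin d → ℝ) → Fin s → ℝ := U.piecewise F 0 with hG
  have hGU : ∀ x ∈ U, G x = F x := fun x hx => Set.piecewise_eq_of_mem _ _ _ hx
  have hGmeas : Measurable G :=
    hF.continuousOn.measurable_piecewise continuousOn_const hU.measurableSet
  have hcurve : ∀ᵐ z ∂(volume.restrict (Metric.ball (0 : Fin d → ℝ) r')), ∀ᵐ t : ℝ,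
      ¬ IsSingularVec (h (G (z + γ t))) := by
    refine (ae_restrict_mem measurableSet_ball).mono fun z hz => ?_
    obtain ⟨hzLI, hzR⟩ := hball z hz
    have hzU : ∀ t, z + γ t ∈ U := fun t => hsubU z hzR _ (hγball t)
    simp only [hGU _ (hzU _)]
    refine ae_not_isSingularVec_of_curve h hu₀ (u := fun t => F (z + γ t)) ?_ fun c hc => ?_
    · exact fun t _ => (hF _ (hzU t)).comp
        (f := fun t => z + γ t) (analyticAt_const.add (hγ t (Set.mem_univ t)))
    · refine eq_zero_of_linearIndependent_of_forall hzLI fun j => ?_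
      obtain ⟨t, ht⟩ := hγp j
      have := hc t
      rwa [ht] at this
  have hγcont : Continuous γ := continuousOn_univ.1 hγ.continuousOn
  have hhcont : Continuous h := h.continuous_of_finiteDimensional
  rw [Measure.ae_ae_comm (p := fun z t => ¬ IsSingularVec (h (G (z + γ t)))) (by
    refine MeasurableSet.compl ((measurableSet_isSingularVec n).preimage
      (f := fun x : (Fin d → ℝ) × ℝ => h (G (x.1 + γ x.2))) ?_)
    exact hhcont.measurable.comp (hGmeas.comp
      (measurable_fst.add (hγcont.measurable.comp measurable_snd))))] at hcurve
  obtain ⟨t, ht, htball⟩ : ∃ t, (∀ᵐ z ∂(volume.restrict (Metric.ball (0 : Fin d → ℝ) r')),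
      ¬ IsSingularVec (h (G (z + γ t)))) ∧ γ t ∈ Metric.ball x₀ r' := by
    have hopen : IsOpen (γ ⁻¹' Metric.ball x₀ r') := Metric.isOpen_ball.preimage hγcont
    obtain ⟨t, ht, ht'⟩ := (Measure.dense_of_ae hcurve).inter_open_nonempty _ hopen
      ⟨0, by simpa [hγ0] using hr'⟩
    exact ⟨t, ht', ht⟩
  rw [ae_restrict_iff' measurableSet_ball] at ht
  have htrans := (measurePreserving_sub_right volume (γ t)).quasiMeasurePreserving.ae ht
  refine ⟨_, inter_mem self_mem_nhdsWithin (mem_nhdsWithin_of_mem_nhds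
    (Metric.isOpen_ball.mem_nhds (Metric.mem_ball_comm.1 htball))), ?_⟩
  refine measure_mono_null (fun x hx => ?_) (ae_iff.1 htrans)
  obtain ⟨hxS, hxball⟩ := hx
  simp only [Set.mem_ofPred_eq, Classical.not_imp, not_not, sub_add_cancel] at hxS ⊢
  rw [hGU x hxS.1]
  refine ⟨?_, hxS.2⟩
  rwa [mem_ball_zero_iff, ← mem_ball_iff_norm]

lemma sum_mul_homogenize {s : ℕ} (c : Fin (s + 1) → ℝ) (u : Fin s → ℝ) :
    ∑ j, c j * homogenize u j = c 0 + ∑ j, c (Fin.succ j) * u j := by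
  rw [Fin.sum_univ_succ]
  simp [homogenize]

lemma eq_zero_of_forall_sum_mul_homogenize {s : ℕ} {c : Fin (s + 1) → ℝ}
    (hc : ∀ u, ∑ j, c j * homogenize u j = 0) : c = 0 := by
  classical
  simp only [sum_mul_homogenize] at hc
  have h0 : c 0 = 0 := by simpa using hc 0
  ext j
  refine Fin.cases h0 (fun j => ?_) j
  simpa [h0, Pi.single_apply] using hc (Pi.single j 1)

lemma eq_zero_of_sum_mul_homogenize_on_ball {s : ℕ} {c : Fin (s + 1) → ℝ} {x₀ : Fin s → ℝ} {r : ℝ}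
    (hr : 0 < r) (hc : ∀ u ∈ Metric.ball x₀ r, ∑ j, c j * homogenize u j = 0) : c = 0 := by
  refine eq_zero_of_forall_sum_mul_homogenize fun u => ?_
  have han : AnalyticOnNhd ℝ (fun u => ∑ j, c j * homogenize u j) Set.univ :=
    Finset.analyticOnNhd_fun_sum _ fun j _ =>
      analyticOnNhd_const.mul (analyticOnNhd_homogenize analyticOnNhd_id j)
  exact congrFun (han.eq_of_eventuallyEq (g := fun _ => 0) analyticOnNhd_const (z₀ := x₀)
    (by filter_upwards [Metric.ball_mem_nhds x₀ hr] with u hu using hc u hu)) u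

/-- The affine subspace cut out by the equation `a + ℓ (y - y₀) = 0`. -/
def affineHyperplane {E : Type*} [AddCommGroup E] [Module ℝ E] (ℓ : E →ₗ[ℝ] ℝ) (y₀ : E) (a : ℝ) :
    AffineSubspace ℝ E where
  carrier := {y | a + ℓ (y - y₀) = 0}
  smul_vsub_vadd_mem' t p₁ p₂ p₃ h₁ h₂ h₃ := by
    simp only [Set.mem_ofPred_eq, vsub_eq_sub, vadd_eq_add, map_sub, map_add, map_smul,
      smul_eq_mul] at *
    linear_combination t * h₁ - t * h₂ + h₃

lemma exists_analyticOnNhd_lift {s n d : ℕ} (h : (Fin s → ℝ) →ᵃ[ℝ] (Fin n → ℝ))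
    (hinj : Function.Injective h) {U : Set (Fin d → ℝ)} {f : (Fin d → ℝ) → (Fin n → ℝ)}
    (hfa : AnalyticOnNhd ℝ f U) (hfL : ∀ x ∈ U, f x ∈ Set.range h)
    (hnp : ∀ (x₀ : Fin d → ℝ) (ρ : ℝ), 0 < ρ → Metric.ball x₀ ρ ⊆ U →
      ∀ L : AffineSubspace ℝ (Fin n → ℝ), f '' Metric.ball x₀ ρ ⊆ (L : Set (Fin n → ℝ)) →
        Set.range h ⊆ (L : Set (Fin n → ℝ))) :
    ∃ F : (Fin d → ℝ) → Fin s → ℝ, AnalyticOnNhd ℝ F U ∧ (∀ x ∈ U, h (F x) = f x) ∧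
      ∀ x₀ r, 0 < r → Metric.ball x₀ r ⊆ U → ∀ c : Fin (s + 1) → ℝ,
        (∀ x ∈ Metric.ball x₀ r, ∑ j, c j * homogenize (F x) j = 0) → c = 0 := by
  obtain ⟨g, hg⟩ := h.linear.exists_leftInverse_of_injective
    (LinearMap.ker_eq_bot.2 (h.linear_injective_iff.2 hinj))
  have hgh : ∀ u, g (h u - h 0) = u := by
    intro u
    have h1 : h u - h 0 = h.linear u := by
      have := h.linearMap_vsub u 0
      simpa using this.symm
    rw [h1]
    exact LinearMap.congr_fun hg u
  refine ⟨fun x => g (f x - h 0), fun x hx => ?_, fun x hx => ?_, fun x₀ r hr hsub c hc => ?_⟩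
  · exact (g.toContinuousLinearMap.analyticAt _).comp (f := fun x => f x - h 0)
      ((hfa x hx).sub analyticAt_const)
  · obtain ⟨u, hu⟩ := hfL x hx
    simp only [← hu, hgh]
  · simp only [sum_mul_homogenize] at hc
    refine eq_zero_of_forall_sum_mul_homogenize fun u => ?_
    have hle := hnp x₀ r hr hsub
      (affineHyperplane (dotProductBilin ℝ ℝ (fun j => c (Fin.succ j)) ∘ₗ g) (h 0) (c 0)) (by
        rintro _ ⟨x, hx, rfl⟩
        exact hc x hx)
    have : c 0 + ∑ j, c (Fin.succ j) * g (h u - h 0) j = 0 := hle ⟨u, rfl⟩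
    rw [sum_mul_homogenize]
    rwa [hgh] at this

theorem stmt_1 (s n d : ℕ) (hsn : s < n)
    (h : AffineMap ℝ (Fin s → ℝ) (Fin n → ℝ)) (hinj : Function.Injective ⇑h)
    (U : Set (Fin d → ℝ)) (hU : IsOpen U) (hUconn : IsConnected U)
    (f : (Fin d → ℝ) → (Fin n → ℝ)) (hfa : AnalyticOnNhd ℝ f U)
    (hfL : ∀ x ∈ U, f x ∈ Set.range ⇑h)
    (hconn : ∀ (x₀ : Fin d → ℝ) (ρ : ℝ), 0 < ρ → Metric.ball x₀ ρ ⊆ U →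
      IsConnected (f '' Metric.ball x₀ ρ))
    (hnp : ∀ (x₀ : Fin d → ℝ) (ρ : ℝ), 0 < ρ → Metric.ball x₀ ρ ⊆ U →
      ∀ L : AffineSubspace ℝ (Fin n → ℝ), f '' Metric.ball x₀ ρ ⊆ (L : Set (Fin n → ℝ)) →
        Set.range ⇑h ⊆ (L : Set (Fin n → ℝ))) :
    List.TFAE [
      ∃ x ∈ U, ¬ IsSingularVec (f x),
      ∃ y ∈ Set.range ⇑h, ¬ IsSingularVec y,
      ∀ᵐ x ∂(volume : Measure (Fin d → ℝ)), x ∈ U → ¬ IsSingularVec (f x),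
      ∀ᵐ t ∂(volume : Measure (Fin s → ℝ)), ¬ IsSingularVec (h t)] := by
  have key : (∃ y ∈ Set.range ⇑h, ¬ IsSingularVec y) → ∃ u₀, ¬ IsSingularVec (h u₀) := by
    rintro ⟨_, ⟨u₀, rfl⟩, hu₀⟩
    exact ⟨u₀, hu₀⟩
  tfae_have 1 → 2 := fun ⟨x, hx, hfx⟩ => ⟨f x, hfL x hx, hfx⟩
  tfae_have 2 → 3 := by
    intro h2
    obtain ⟨u₀, hu₀⟩ := key h2
    obtain ⟨F, hF, hFf, hnd⟩ := exists_analyticOnNhd_lift h hinj hfa hfL hnp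
    filter_upwards [ae_not_isSingularVec_of_analyticOnNhd h hu₀ hU hF hnd] with x hx hxU
    rw [← hFf x hxU]
    exact hx hxU
  tfae_have 3 → 1 := by
    intro h3
    obtain ⟨x, hxU, hx⟩ := (Measure.dense_of_ae h3).inter_open_nonempty U hU hUconn.nonempty
    exact ⟨x, hxU, hx hxU⟩
  tfae_have 2 → 4 := by
    intro h2
    obtain ⟨u₀, hu₀⟩ := key h2
    filter_upwards [ae_not_isSingularVec_of_analyticOnNhd h hu₀ isOpen_univ
      (F := fun u => u) analyticOnNhd_id
      fun _ _ hr _ _ hc => eq_zero_of_sum_mul_homogenize_on_ball hr hc] with t ht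
    exact ht (Set.mem_univ t)
  tfae_have 4 → 2 := by
    intro h4
    obtain ⟨t, ht⟩ := h4.exists
    exact ⟨h t, ⟨t, rfl⟩, ht⟩
  tfae_finish
end

section
/- Let 0 ≤ s < n and let A be an (s+1)×(n−s) real matrix. Assume that either (a) there exist a vector v ∈ ℝ^{s+1} and rational numbers r₁, …, r_{n−s} such that for each l the l-th column of A equals r_l·v, or (b) there exist a vector u ∈ ℝ^{n−s} and rational numbers r₀, …, r_s such that for each i the i-th row of A equals r_i·u. Then A is not n-singular if and only if for Lebesgue-almost every x ∈ ℝ^s the vector (x, x̃A) ∈ ℝ^n is not singular. -/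
open MeasureTheory Filter

/-- A real `k×l` matrix `A` is `ω`-singular (here `Q ^ ω` is `Real.rpow`). -/
def IsMatSingular {k l : ℕ} (A : Matrix (Fin k) (Fin l) ℝ) (ω : ℝ) : Prop :=
  ∀ c : ℝ, 0 < c → ∃ Q₀ : ℝ, 0 < Q₀ ∧ ∀ Q : ℝ, Q₀ ≤ Q →
    ∃ q : Fin l → ℤ, q ≠ 0 ∧ ∃ p : Fin k → ℤ,
      (∀ i, |(∑ j, A i j * (q j : ℝ)) + (p i : ℝ)| < c / Q ^ ω) ∧ ∀ j, |(q j : ℝ)| ≤ Q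

/-- The point `(x, x̃A)` of the affine subspace `𝓛_A ⊆ ℝ^n`, where `n = s + m`,
`A` is an `(s+1) × m` matrix and `x̃ = (1, x)`. -/
noncomputable def affVec {s m : ℕ} (A : Matrix (Fin (s+1)) (Fin m) ℝ) (x : Fin s → ℝ) :
    Fin (s + m) → ℝ :=
  Fin.append x (fun l => ∑ i, (Fin.cons 1 x : Fin (s+1) → ℝ) i * A i l)

/-- The vector `A q + p`. -/
noncomputable def intCombo {k l : ℕ} (A : Matrix (Fin k) (Fin l) ℝ) (q : Fin l → ℤ)
    (p : Fin k → ℤ) : Fin k → ℝ :=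
  fun i => (∑ j, A i j * (q j : ℝ)) + (p i : ℝ)

/-- The affine form `x ↦ x̃ · w`, where `x̃ = (1, x)`. -/
noncomputable def affForm {s : ℕ} (w : Fin (s + 1) → ℝ) (x : Fin s → ℝ) : ℝ :=
  ∑ i, (Fin.cons 1 x : Fin (s + 1) → ℝ) i * w i

lemma affForm_eq {s : ℕ} (w : Fin (s + 1) → ℝ) (x : Fin s → ℝ) :
    affForm w x = w 0 + ∑ i, x i * w i.succ := by
  simp [affForm, Fin.sum_univ_succ]

lemma sum_mul_affVec {s m : ℕ} (A : Matrix (Fin (s + 1)) (Fin m) ℝ) (x : Fin s → ℝ)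
    (q : Fin m → ℤ) (p : Fin (s + 1) → ℤ) :
    (∑ i, ((Fin.append (fun i : Fin s => p i.succ) q i : ℤ) : ℝ) * affVec A x i) + (p 0 : ℝ)
      = affForm (intCombo A q p) x := by
  have h : ∑ l, (q l : ℝ) * ∑ i, (Fin.cons 1 x : Fin (s + 1) → ℝ) i * A i l
      = ∑ i, (Fin.cons 1 x : Fin (s + 1) → ℝ) i * ∑ j, A i j * (q j : ℝ) := by
    simp_rw [Finset.mul_sum]
    rw [Finset.sum_comm]
    refine Finset.sum_congr rfl fun i _ => Finset.sum_congr rfl fun j _ => by ring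
  have h2 : affForm (intCombo A q p) x
      = (∑ i, (Fin.cons 1 x : Fin (s + 1) → ℝ) i * ∑ j, A i j * (q j : ℝ))
        + ∑ i, (Fin.cons 1 x : Fin (s + 1) → ℝ) i * (p i : ℝ) := by
    simp only [affForm, intCombo, mul_add, Finset.sum_add_distrib]
  rw [h2, ← h, Fin.sum_univ_add, Fin.sum_univ_succ (f := fun i => _ * (p i : ℝ))]
  simp only [affVec, Fin.append_left, Fin.append_right, Fin.cons_zero, Fin.cons_succ]
  simp_rw [mul_comm (x _)]
  ring

/-- The integer solutions witnessing singularity of a point of `𝓛_A` at scale `Q`. -/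
def AffSolvable {s m : ℕ} (A : Matrix (Fin (s + 1)) (Fin m) ℝ) (Q η : ℝ) (x : Fin s → ℝ) :
    Prop :=
  ∃ (q : Fin m → ℤ) (p : Fin (s + 1) → ℤ), (q ≠ 0 ∨ ∃ i : Fin s, p i.succ ≠ 0) ∧
    |affForm (intCombo A q p) x| < η ∧ (∀ j, |(q j : ℝ)| ≤ Q) ∧
      ∀ i : Fin s, |(p i.succ : ℝ)| ≤ Q

lemma isSingularVec_affVec_iff {s m : ℕ} (A : Matrix (Fin (s + 1)) (Fin m) ℝ) (x : Fin s → ℝ) :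
    IsSingularVec (affVec A x) ↔ ∀ c : ℝ, 0 < c → ∃ Q₀ : ℝ, 0 < Q₀ ∧ ∀ Q : ℝ, Q₀ ≤ Q →
      AffSolvable A Q (c / Q ^ (s + m)) x := by
  refine forall₂_congr fun c _ => exists_congr fun Q₀ => and_congr_right fun _ =>
    forall₂_congr fun Q _ => ⟨?_, ?_⟩
  · rintro ⟨q, hq, q₀, h, hQ⟩
    have happ : Fin.append (fun i : Fin s => (Fin.cons q₀ (fun i => q (Fin.castAdd m i)) :
        Fin (s + 1) → ℤ) i.succ) (fun j => q (Fin.natAdd s j)) = q := by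
      simpa using Fin.append_castAdd_natAdd (f := q)
    refine ⟨fun j => q (Fin.natAdd s j), Fin.cons q₀ fun i => q (Fin.castAdd m i), ?_, ?_,
      fun j => hQ _, fun i => by simpa using hQ _⟩
    · by_contra! hne
      refine hq (funext fun i => ?_)
      induction i using Fin.addCases with
      | left i => simpa using hne.2 i
      | right j => exact congrFun hne.1 j
    · rw [← sum_mul_affVec, happ]
      simpa using h
  · rintro ⟨q, p, hne, h, hq, hp⟩
    refine ⟨Fin.append (fun i : Fin s => p i.succ) q, ?_, p 0, ?_, fun i => ?_⟩
    · intro h0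
      rcases hne with hne | ⟨i, hi⟩
      · exact hne (funext fun j => by simpa using congrFun h0 (Fin.natAdd s j))
      · exact hi (by simpa using congrFun h0 (Fin.castAdd m i))
    · rwa [sum_mul_affVec]
    · induction i using Fin.addCases with
      | left i => simpa using hp i
      | right j => simpa using hq j

/-- If `A` is `n`-singular, then every point of `𝓛_A` is singular. -/
lemma isSingularVec_affVec_of_isMatSingular {s m : ℕ} (A : Matrix (Fin (s + 1)) (Fin m) ℝ)
    (hA : IsMatSingular A ((s + m : ℕ) : ℝ)) (x : Fin s → ℝ) : IsSingularVec (affVec A x) := by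
  rw [isSingularVec_affVec_iff]
  intro c hc
  set K : ℝ := 1 + ∑ i, ∑ j, |A i j| with hK
  have hK1 : 1 ≤ K := le_add_of_nonneg_right (by positivity)
  set X : ℝ := 1 + ∑ i, |(Fin.cons 1 x : Fin (s + 1) → ℝ) i| with hX
  have hX0 : 0 < X := by positivity
  have hKn : 0 < K ^ (s + m) := by positivity
  obtain ⟨Q₀, hQ₀, h⟩ := hA (min 1 (c / (X * K ^ (s + m)))) (by positivity)
  refine ⟨K * max 1 Q₀, by positivity, fun Q hQ => ?_⟩
  have hK0 : 0 < K := by linarith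
  have hQK : max 1 Q₀ ≤ Q / K := by rwa [le_div_iff₀ hK0, mul_comm]
  have h1Q : 1 ≤ Q / K := (le_max_left _ _).trans hQK
  have hQ0 : 0 < Q := by
    have : 0 < K * max 1 Q₀ := by positivity
    linarith
  obtain ⟨q, hq, p, hp, hqQ⟩ := h (Q / K) ((le_max_right _ _).trans hQK)
  simp only [Real.rpow_natCast] at hp
  have hpow : 0 < (Q / K) ^ (s + m) := by positivity
  refine ⟨q, p, Or.inl hq, ?_, fun j => (hqQ j).trans (div_le_self hQ0.le hK1), fun i => ?_⟩
  · have hw : ∀ i, |intCombo A q p i| ≤ c / (X * Q ^ (s + m)) := fun i => by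
      refine (hp i).le.trans ?_
      rw [div_le_iff₀ hpow]
      refine (min_le_right _ _).trans (le_of_eq ?_)
      rw [div_pow]
      field_simp
    have hsum : |affForm (intCombo A q p) x|
        ≤ (∑ i, |(Fin.cons 1 x : Fin (s + 1) → ℝ) i|) * (c / (X * Q ^ (s + m))) := by
      rw [Finset.sum_mul]
      refine (Finset.abs_sum_le_sum_abs _ _).trans (Finset.sum_le_sum fun i _ => ?_)
      rw [abs_mul]
      exact mul_le_mul_of_nonneg_left (hw i) (abs_nonneg _)
    refine hsum.trans_lt ?_
    have : c / Q ^ (s + m) = X * (c / (X * Q ^ (s + m))) := by field_simp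
    rw [this]
    exact mul_lt_mul_of_pos_right (by rw [hX]; linarith) (by positivity)
  · have h1 : |∑ j, A i.succ j * (q j : ℝ)| ≤ (K - 1) * (Q / K) := by
      have h2 : ∑ j, |A i.succ j| ≤ K - 1 := by
        rw [hK, add_sub_cancel_left]
        exact Finset.single_le_sum (f := fun i => ∑ j, |A i j|)
          (fun i _ => Finset.sum_nonneg fun j _ => abs_nonneg _) (Finset.mem_univ i.succ)
      refine le_trans ?_ (mul_le_mul_of_nonneg_right h2 (by positivity))
      rw [Finset.sum_mul]
      refine (Finset.abs_sum_le_sum_abs _ _).trans (Finset.sum_le_sum fun j _ => ?_)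
      rw [abs_mul]
      exact mul_le_mul_of_nonneg_left (hqQ j) (abs_nonneg _)
    have h3 : |(∑ j, A i.succ j * (q j : ℝ)) + (p i.succ : ℝ)| ≤ 1 := by
      refine (hp i.succ).le.trans ((div_le_self (by positivity) (one_le_pow₀ h1Q)).trans
        (min_le_left _ _))
    have h4 : K * (Q / K) = Q := by field_simp
    rw [abs_le] at *
    constructor <;> nlinarith

/-- When `s = 0`, the single point of `𝓛_A` is singular only if `A` is. -/
lemma isMatSingular_of_isSingularVec_affVec {m : ℕ} (A : Matrix (Fin (0 + 1)) (Fin m) ℝ)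
    (x : Fin 0 → ℝ) (hx : IsSingularVec (affVec A x)) :
    IsMatSingular A ((0 + m : ℕ) : ℝ) := by
  rw [isSingularVec_affVec_iff] at hx
  intro c hc
  obtain ⟨Q₀, hQ₀, h⟩ := hx c hc
  refine ⟨Q₀, hQ₀, fun Q hQ => ?_⟩
  obtain ⟨q, p, hne, hlt, hq, -⟩ := h Q hQ
  refine ⟨q, hne.resolve_right fun ⟨i, _⟩ => i.elim0, p, fun i => ?_, hq⟩
  rw [Real.rpow_natCast]
  rw [affForm_eq] at hlt
  obtain rfl : i = 0 := Fin.fin_one_eq_zero i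
  simpa [intCombo] using hlt

/-- Small values of `A q + p` are pairwise proportional. -/
def SmallParallel {s m : ℕ} (A : Matrix (Fin (s + 1)) (Fin m) ℝ) (δ : ℝ) : Prop :=
  ∀ Q : ℝ, 1 ≤ Q → ∀ (q q' : Fin m → ℤ) (p p' : Fin (s + 1) → ℤ),
    (∀ j, |(q j : ℝ)| ≤ Q) → (∀ j, |(q' j : ℝ)| ≤ Q) →
    (∀ i, |intCombo A q p i| < δ / Q) → (∀ i, |intCombo A q' p' i| < δ / Q) →
    ∀ i j, intCombo A q p i * intCombo A q' p' j = intCombo A q p j * intCombo A q' p' i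

lemma exists_common_denominator {ι : Type*} [Fintype ι] (r : ι → ℚ) :
    ∃ D : ℕ, 0 < D ∧ ∃ z : ι → ℤ, ∀ i, (D : ℝ) * (r i : ℝ) = z i := by
  refine ⟨∏ i, (r i).den, Finset.prod_pos fun i _ => (r i).pos, ?_⟩
  choose k hk using fun i => Finset.dvd_prod_of_mem (fun i => (r i).den) (Finset.mem_univ i)
  refine ⟨fun i => k i * (r i).num, fun i => ?_⟩
  have h : ((r i).den : ℝ) * (r i : ℝ) = (r i).num := by
    exact_mod_cast Rat.den_mul_eq_num (r i)
  rw [hk i]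
  push_cast
  rw [← h]
  ring

lemma int_eq_zero_of_abs_cast_lt_one {z : ℤ} (h : |(z : ℝ)| < 1) : z = 0 := by
  rw [← Int.abs_lt_one_iff]
  exact_mod_cast h

lemma smallParallel_of_columns {s m : ℕ} (A : Matrix (Fin (s + 1)) (Fin m) ℝ)
    (v : Fin (s + 1) → ℝ) (r : Fin m → ℚ) (hA : ∀ i l, A i l = (r l : ℝ) * v i) :
    ∃ δ : ℝ, 0 < δ ∧ SmallParallel A δ := by
  obtain ⟨D, hD, z, hz⟩ := exists_common_denominator r
  have hD' : (1 : ℝ) ≤ D := by exact_mod_cast hD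
  set C : ℝ := ∑ l, |(r l : ℝ)| with hC
  have hC0 : 0 ≤ C := by positivity
  have hden : 0 < 2 * (D * C) + 1 := by positivity
  refine ⟨1 / (2 * (D * C) + 1), by positivity, ?_⟩
  intro Q hQ q q' p p' hq hq' hw hw' i j
  have hQ0 : 0 < Q := by linarith
  have hcombo : ∀ (q : Fin m → ℤ) (p : Fin (s + 1) → ℤ) i,
      intCombo A q p i = (∑ l, (r l : ℝ) * q l) * v i + p i := fun q p i => by
    simp only [intCombo, hA, Finset.sum_mul]
    congr 1
    exact Finset.sum_congr rfl fun l _ => by ring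
  have hbound : ∀ q : Fin m → ℤ, (∀ j, |(q j : ℝ)| ≤ Q) → |∑ l, (r l : ℝ) * q l| ≤ C * Q :=
    fun q hq => by
      rw [hC, Finset.sum_mul]
      refine (Finset.abs_sum_le_sum_abs _ _).trans (Finset.sum_le_sum fun l _ => ?_)
      rw [abs_mul]
      exact mul_le_mul_of_nonneg_left (hq l) (abs_nonneg _)
  have hint : ∀ q : Fin m → ℤ, (D : ℝ) * ∑ l, (r l : ℝ) * q l = ((∑ l, z l * q l : ℤ) : ℝ) :=
    fun q => by
      push_cast
      rw [Finset.mul_sum]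
      exact Finset.sum_congr rfl fun l _ => by rw [← hz]; ring
  set ρ := ∑ l, (r l : ℝ) * q l with hρ
  set ρ' := ∑ l, (r l : ℝ) * q' l with hρ'
  have hcross : ∀ k, ρ * intCombo A q' p' k = ρ' * intCombo A q p k := fun k => by
    have h1 : (D : ℝ) * (ρ * intCombo A q' p' k - ρ' * intCombo A q p k)
        = (((∑ l, z l * q l) * p' k - (∑ l, z l * q' l) * p k : ℤ) : ℝ) := by
      rw [Int.cast_sub, Int.cast_mul, Int.cast_mul, ← hint, ← hint, hcombo, hcombo, ← hρ, ← hρ']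
      ring
    have h2 : |(D : ℝ) * (ρ * intCombo A q' p' k - ρ' * intCombo A q p k)| < 1 := by
      have hb : ∀ a b : ℝ, |a| ≤ C * Q → |b| < 1 / (2 * (D * C) + 1) / Q →
          |a * b| ≤ C * (1 / (2 * (D * C) + 1)) := fun a b ha hb => by
        rw [abs_mul]
        calc |a| * |b| ≤ C * Q * (1 / (2 * (D * C) + 1) / Q) :=
              mul_le_mul ha hb.le (abs_nonneg _) (by positivity)
          _ = _ := by field_simp
      rw [abs_mul, Nat.abs_cast]
      calc (D : ℝ) * |ρ * intCombo A q' p' k - ρ' * intCombo A q p k|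
          ≤ D * (C * (1 / (2 * (D * C) + 1)) + C * (1 / (2 * (D * C) + 1))) := by
            refine mul_le_mul_of_nonneg_left ((abs_sub _ _).trans ?_) (by positivity)
            exact add_le_add (hb _ _ (hbound q hq) (hw' k)) (hb _ _ (hbound q' hq') (hw k))
        _ = 2 * (D * C) / (2 * (D * C) + 1) := by ring
        _ < 1 := by rw [div_lt_one hden]; linarith
    rw [h1] at h2
    have h3 := int_eq_zero_of_abs_cast_lt_one h2
    rw [h3, Int.cast_zero] at h1
    have := (mul_eq_zero.1 h1).resolve_left (by positivity)
    linarith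
  by_cases h0 : ρ = 0
  · have hz0 : ∀ k, intCombo A q p k = 0 := fun k => by
      have hk := hw k
      rw [hcombo, ← hρ, h0, zero_mul, zero_add] at hk ⊢
      have : 1 / (2 * (D * C) + 1) / Q ≤ 1 := by
        rw [div_div, div_le_one (by positivity)]
        nlinarith [mul_nonneg (zero_le_one.trans hD') hC0]
      rw [int_eq_zero_of_abs_cast_lt_one (hk.trans_le this), Int.cast_zero]
    simp [hz0]
  · refine mul_left_cancel₀ h0 ?_
    linear_combination intCombo A q p i * hcross j - intCombo A q p j * hcross i

lemma smallParallel_of_rows {s m : ℕ} (A : Matrix (Fin (s + 1)) (Fin m) ℝ)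
    (u : Fin m → ℝ) (r : Fin (s + 1) → ℚ) (hA : ∀ i l, A i l = (r i : ℝ) * u l) :
    ∃ δ : ℝ, 0 < δ ∧ SmallParallel A δ := by
  obtain ⟨D, hD, z, hz⟩ := exists_common_denominator r
  have hD' : (1 : ℝ) ≤ D := by exact_mod_cast hD
  set C : ℝ := ∑ l, |(r l : ℝ)| with hC
  have hC0 : 0 ≤ C := by positivity
  have hrC : ∀ i, |(r i : ℝ)| ≤ C := fun i =>
    Finset.single_le_sum (f := fun i => |(r i : ℝ)|) (fun i _ => abs_nonneg _) (Finset.mem_univ i)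
  have hden : 0 < 2 * (D * C) + 1 := by positivity
  have hcombo : ∀ (q : Fin m → ℤ) (p : Fin (s + 1) → ℤ) i,
      intCombo A q p i = (∑ l, u l * q l) * r i + p i := fun q p i => by
    simp only [intCombo, hA, Finset.sum_mul]
    congr 1
    exact Finset.sum_congr rfl fun l _ => by ring
  have hcross : ∀ (q : Fin m → ℤ) (p : Fin (s + 1) → ℤ),
      (∀ i, |intCombo A q p i| < 1 / (2 * (D * C) + 1)) →
      ∀ i j, intCombo A q p i * r j = intCombo A q p j * r i := fun q p hw i j => by
    have h1 : (D : ℝ) * (intCombo A q p i * r j - intCombo A q p j * r i)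
        = ((p i * z j - p j * z i : ℤ) : ℝ) := by
      push_cast
      rw [← hz, ← hz, hcombo, hcombo]
      ring
    have h2 : |(D : ℝ) * (intCombo A q p i * r j - intCombo A q p j * r i)| < 1 := by
      have hb : ∀ i j, |intCombo A q p i * r j| ≤ 1 / (2 * (D * C) + 1) * C := fun i j => by
        rw [abs_mul]
        exact mul_le_mul (hw i).le (hrC j) (abs_nonneg _) (by positivity)
      rw [abs_mul, Nat.abs_cast]
      calc (D : ℝ) * |intCombo A q p i * r j - intCombo A q p j * r i|
          ≤ D * (1 / (2 * (D * C) + 1) * C + 1 / (2 * (D * C) + 1) * C) := by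
            refine mul_le_mul_of_nonneg_left ((abs_sub _ _).trans ?_) (by positivity)
            exact add_le_add (hb _ _) (hb _ _)
        _ = 2 * (D * C) / (2 * (D * C) + 1) := by ring
        _ < 1 := by rw [div_lt_one hden]; linarith
    rw [h1] at h2
    have h3 := int_eq_zero_of_abs_cast_lt_one h2
    rw [h3, Int.cast_zero] at h1
    have := (mul_eq_zero.1 h1).resolve_left (by positivity)
    linarith
  refine ⟨1 / (2 * (D * C) + 1), by positivity, ?_⟩
  intro Q hQ q q' p p' _ _ hw hw' i j
  have hle : 1 / (2 * (D * C) + 1) / Q ≤ 1 / (2 * (D * C) + 1) :=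
    div_le_self (by positivity) hQ
  replace hw := fun i => (hw i).trans_le hle
  replace hw' := fun i => (hw' i).trans_le hle
  have hc := hcross q p hw
  have hc' := hcross q' p' hw'
  by_cases h0 : ∀ k, (r k : ℝ) = 0
  · have hz0 : ∀ k, intCombo A q p k = 0 := fun k => by
      have hk := hw k
      rw [hcombo, h0, mul_zero, zero_add] at hk ⊢
      have : 1 / (2 * (D * C) + 1) ≤ 1 := by
        rw [div_le_one (by positivity)]
        nlinarith [mul_nonneg (zero_le_one.trans hD') hC0]
      rw [int_eq_zero_of_abs_cast_lt_one (hk.trans_le this), Int.cast_zero]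
    simp [hz0]
  · push Not at h0
    obtain ⟨k, hk⟩ := h0
    refine mul_left_cancel₀ (mul_ne_zero hk hk) ?_
    linear_combination (r k * intCombo A q' p' j) * hc i k + (intCombo A q p k * r i) * hc' j k
      - (r k * intCombo A q' p' i) * hc j k - (intCombo A q p k * r j) * hc' i k

/-- The cube `[-M, M]^s`. -/
def cube (s : ℕ) (M : ℝ) : Set (Fin s → ℝ) := Set.Icc (fun _ => -M) (fun _ => M)

lemma volume_cube {s : ℕ} {M : ℝ} (hM : 0 ≤ M) :
    volume (cube s M) = ENNReal.ofReal ((2 * M) ^ s) := by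
  rw [cube, Real.volume_Icc_pi]
  simp only [Finset.prod_const, Finset.card_univ, Fintype.card_fin]
  rw [ENNReal.ofReal_pow (by linarith)]
  congr 2
  ring

lemma det_updateRow_one {ι : Type*} [Fintype ι] [DecidableEq ι] (i : ι) (a : ι → ℝ) :
    ((1 : Matrix ι ι ℝ).updateRow i a).det = a i := by
  have h : a = ∑ j, a j • (1 : Matrix ι ι ℝ) j := by
    ext k
    simp [Finset.sum_apply, Matrix.one_apply]
  conv_lhs => rw [h]
  rw [Matrix.det_updateRow_sum]
  simp

/-- A slab of the cube transverse to a coordinate direction has small volume. -/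
lemma volume_cube_slab_le {s : ℕ} {M : ℝ} (hM : 1 ≤ M) (w : Fin (s + 1) → ℝ) (i : Fin s)
    (hi : w i.succ ≠ 0) {η : ℝ} (hη : 0 ≤ η) :
    volume {x ∈ cube s M | |affForm w x| < η}
      ≤ ENNReal.ofReal ((2 * M) ^ s * (2 * η / |w i.succ|)) := by
  set f : (Fin s → ℝ) →ₗ[ℝ] (Fin s → ℝ) :=
    Matrix.toLin' ((1 : Matrix (Fin s) (Fin s) ℝ).updateRow i fun j => w j.succ) with hf
  have hdet : LinearMap.det f = w i.succ := by
    rw [hf, LinearMap.det_toLin', det_updateRow_one]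
  set I : Fin s → Set ℝ :=
    fun j => if j = i then Set.Ioo (-w 0 - η) (-w 0 + η) else Set.Icc (-M) M with hI
  have hsub : {x ∈ cube s M | |affForm w x| < η} ⊆ f ⁻¹' Set.univ.pi I := by
    rintro x ⟨hx, hxη⟩ j -
    rw [affForm_eq, abs_lt] at hxη
    by_cases hj : j = i
    · subst hj
      simp only [hf, hI, if_true, Matrix.toLin'_apply, Matrix.mulVec, Matrix.updateRow_self,
        dotProduct]
      simp_rw [mul_comm (w _)]
      constructor <;> linarith
    · simp only [hf, hI, hj, if_false, Matrix.toLin'_apply, Matrix.mulVec,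
        Matrix.updateRow_ne hj]
      simpa [dotProduct, Matrix.one_apply] using ⟨hx.1 j, hx.2 j⟩
  refine (measure_mono hsub).trans ?_
  rw [Measure.addHaar_preimage_linearMap _ (by rwa [hdet]), hdet, volume_pi_pi,
    ← Finset.mul_prod_erase _ _ (Finset.mem_univ i)]
  have h1 : ∏ j ∈ Finset.univ.erase i, volume (I j) ≤ ENNReal.ofReal ((2 * M) ^ s) := by
    have : ∀ j ∈ Finset.univ.erase i, volume (I j) = ENNReal.ofReal (2 * M) := fun j hj => by
      simp only [hI, Finset.ne_of_mem_erase hj, if_false, Real.volume_Icc]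
      congr 1
      ring
    rw [Finset.prod_congr rfl this, Finset.prod_const, ← ENNReal.ofReal_pow (by linarith)]
    refine ENNReal.ofReal_le_ofReal (pow_le_pow_right₀ (by linarith) ?_)
    exact (Finset.card_le_univ _).trans (by simp)
  have h2 : volume (I i) = ENNReal.ofReal (2 * η) := by
    simp only [hI, if_true, Real.volume_Ioo]
    congr 1
    ring
  rw [h2]
  calc ENNReal.ofReal |(w i.succ)⁻¹| * (ENNReal.ofReal (2 * η)
        * ∏ j ∈ Finset.univ.erase i, volume (I j))
      ≤ ENNReal.ofReal |(w i.succ)⁻¹| * (ENNReal.ofReal (2 * η)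
        * ENNReal.ofReal ((2 * M) ^ s)) := by gcongr
    _ = _ := by
      rw [← ENNReal.ofReal_mul (by linarith), ← ENNReal.ofReal_mul (abs_nonneg _), abs_inv]
      congr 1
      ring

lemma abs_sum_mul_le_of_mem_cube {s : ℕ} {M : ℝ} {x : Fin s → ℝ} (hx : x ∈ cube s M)
    (hM : 0 ≤ M) {a : Fin s → ℝ} {W : ℝ} (ha : ∀ i, |a i| ≤ W) :
    |∑ i, x i * a i| ≤ s * (M * W) := by
  refine (Finset.abs_sum_le_sum_abs _ _).trans ?_
  have : ∀ i ∈ Finset.univ, |x i * a i| ≤ M * W := fun i _ => by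
    rw [abs_mul]
    exact mul_le_mul (abs_le.2 ⟨hx.1 i, hx.2 i⟩) (ha i) (abs_nonneg _) hM
  simpa using Finset.sum_le_card_nsmul _ _ _ this

/-- A slab of the cube has volume at most a constant times its relative width. -/
lemma volume_cube_slab_le_of_le {s : ℕ} {M : ℝ} (hM : 1 ≤ M) (w : Fin (s + 1) → ℝ)
    {ρ : ℝ} (hρ : 0 < ρ) {k : Fin (s + 1)} (hk : ρ ≤ |w k|) {η : ℝ} (hη : 0 ≤ η) :
    volume {x ∈ cube s M | |affForm w x| < η}
      ≤ ENNReal.ofReal ((2 * M) ^ s * (4 * (s + 1) * M) * (η / ρ)) := by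
  have hpow : 0 < (2 * M) ^ s := by positivity
  have hσ : 0 < 2 * ((s : ℝ) + 1) * M := by positivity
  by_cases h : ∃ i : Fin s, ρ / (2 * (s + 1) * M) ≤ |w i.succ|
  · obtain ⟨i, hi⟩ := h
    have hpos : 0 < |w i.succ| := lt_of_lt_of_le (by positivity) hi
    refine (volume_cube_slab_le hM w i (abs_pos.1 hpos) hη).trans (ENNReal.ofReal_le_ofReal ?_)
    rw [mul_assoc]
    refine mul_le_mul_of_nonneg_left ?_ hpow.le
    calc 2 * η / |w i.succ| ≤ 2 * η / (ρ / (2 * (s + 1) * M)) := by gcongr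
      _ = _ := by field_simp; ring
  · push Not at h
    have hk0 : k = 0 := by
      by_contra hne
      obtain ⟨i, rfl⟩ := Fin.exists_succ_eq.2 hne
      have h1 := h i
      rw [lt_div_iff₀ hσ] at h1
      nlinarith [mul_le_mul hk (show (1 : ℝ) ≤ 2 * (s + 1) * M by
        nlinarith [(Nat.cast_nonneg s : (0 : ℝ) ≤ s)]) zero_le_one (abs_nonneg _)]
    subst hk0
    by_cases hηρ : η ≤ ρ / 2
    · have : {x ∈ cube s M | |affForm w x| < η} = ∅ := by
        refine Set.eq_empty_of_forall_notMem ?_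
        rintro x ⟨hx, hxη⟩
        have h1 := abs_sum_mul_le_of_mem_cube hx (by linarith)
          (a := fun i => w i.succ) fun i => (h i).le
        have h2 : s * (M * (ρ / (2 * (s + 1) * M))) ≤ ρ / 2 := by
          rw [show s * (M * (ρ / (2 * (s + 1) * M))) = (s / (s + 1)) * (ρ / 2) by field_simp]
          refine mul_le_of_le_one_left (by linarith) ?_
          rw [div_le_one (by positivity)]
          linarith
        rw [affForm_eq] at hxη
        have h3 : |w 0| ≤ |w 0 + ∑ i, x i * w i.succ| + |∑ i, x i * w i.succ| := by
          simpa using abs_sub (w 0 + ∑ i, x i * w i.succ) (∑ i, x i * w i.succ)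
        linarith
      rw [this, measure_empty]
      exact zero_le
    · refine (measure_mono (Set.sep_subset _ _)).trans ?_
      rw [volume_cube (by linarith)]
      refine ENNReal.ofReal_le_ofReal ?_
      rw [mul_assoc]
      refine le_mul_of_one_le_right hpow.le ?_
      have h1 : 1 / 2 ≤ η / ρ := by
        rw [le_div_iff₀ hρ]
        linarith
      have h2 : 4 ≤ 4 * ((s : ℝ) + 1) * M := by
        nlinarith [(Nat.cast_nonneg s : (0 : ℝ) ≤ s)]
      nlinarith

/-- The points of the cube at which an affine form with a large linear part is close to an
integer. -/
lemma volume_cube_near_int_le {s : ℕ} {M : ℝ} (hM : 1 ≤ M) (w : Fin (s + 1) → ℝ)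
    {δ : ℝ} (hδ : 0 < δ) (hw : ∃ i : Fin s, δ ≤ |w i.succ|) {η : ℝ} (hη : 0 ≤ η) (hη1 : η ≤ 1) :
    volume {x ∈ cube s M | ∃ k : ℤ, |affForm w x + k| < η}
      ≤ ENNReal.ofReal ((2 * M) ^ s * (4 * s * M + 6 / δ) * η) := by
  obtain ⟨i₀, hi₀⟩ := hw
  obtain ⟨i, -, hi⟩ := Finset.exists_max_image Finset.univ (fun i : Fin s => |w i.succ|)
    ⟨i₀, Finset.mem_univ _⟩
  set W := |w i.succ| with hW
  have hWδ : δ ≤ W := hi₀.trans (hi i₀ (Finset.mem_univ _))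
  have hW0 : 0 < W := hδ.trans_le hWδ
  set T : ℝ := s * (M * W) + 1 with hT
  have hT0 : 0 ≤ T := by positivity
  set F : Finset ℤ := Finset.Icc ⌈-w 0 - T⌉ ⌊-w 0 + T⌋ with hF
  have hcard : (F.card : ℝ) ≤ 2 * T + 1 := by
    rw [hF, Int.card_Icc]
    rcases le_total 0 (⌊-w 0 + T⌋ + 1 - ⌈-w 0 - T⌉) with h | h
    · have h1 : (((⌊-w 0 + T⌋ + 1 - ⌈-w 0 - T⌉).toNat : ℤ) : ℝ)
          = ((⌊-w 0 + T⌋ + 1 - ⌈-w 0 - T⌉ : ℤ) : ℝ) := by rw [Int.toNat_of_nonneg h]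
      rw [Int.cast_natCast] at h1
      rw [h1]
      push_cast
      have h2 := Int.floor_le (-w 0 + T)
      have h3 := Int.le_ceil (-w 0 - T)
      linarith
    · rw [Int.toNat_of_nonpos h]
      push_cast
      linarith
  have hsub : {x ∈ cube s M | ∃ k : ℤ, |affForm w x + k| < η}
      ⊆ ⋃ k ∈ F, {x ∈ cube s M | |affForm (Fin.cons (w 0 + k) fun i => w i.succ) x| < η} := by
    rintro x ⟨hx, k, hk⟩
    have h1 := abs_sum_mul_le_of_mem_cube hx (by linarith)
      (a := fun i => w i.succ) fun j => hi j (Finset.mem_univ _)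
    simp only [Set.mem_iUnion]
    refine ⟨k, ?_, hx, ?_⟩
    · rw [affForm_eq] at hk
      rw [abs_lt] at hk
      rw [abs_le] at h1
      rw [hF, Finset.mem_Icc, Int.ceil_le, Int.le_floor]
      constructor <;> linarith [hk.1, hk.2, h1.1, h1.2]
    · rw [affForm_eq] at hk ⊢
      simp only [Fin.cons_zero, Fin.cons_succ]
      convert hk using 2
      ring
  refine (measure_mono hsub).trans ((measure_biUnion_finset_le _ _).trans ?_)
  refine (Finset.sum_le_card_nsmul F _ (ENNReal.ofReal ((2 * M) ^ s * (2 * η / W)))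
    fun k _ => ?_).trans ?_
  · exact volume_cube_slab_le hM (Fin.cons (w 0 + k) fun i => w i.succ) i
      (by simpa using abs_pos.1 hW0) hη
  · rw [← ENNReal.ofReal_nsmul, nsmul_eq_mul]
    refine ENNReal.ofReal_le_ofReal ?_
    calc (F.card : ℝ) * ((2 * M) ^ s * (2 * η / W))
        ≤ (2 * T + 1) * ((2 * M) ^ s * (2 * η / W)) :=
          mul_le_mul_of_nonneg_right hcard (by positivity)
      _ = (2 * M) ^ s * (4 * s * M + 6 / W) * η := by rw [hT]; field_simp; ring
      _ ≤ _ := by gcongr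

/-- The integer vectors of sup norm at most `Q`. -/
noncomputable def intBox (k : ℕ) (Q : ℝ) : Finset (Fin k → ℤ) :=
  Fintype.piFinset fun _ => Finset.Icc (-⌊Q⌋) ⌊Q⌋

lemma mem_intBox {k : ℕ} {Q : ℝ} {q : Fin k → ℤ} :
    q ∈ intBox k Q ↔ ∀ j, |(q j : ℝ)| ≤ Q := by
  simp only [intBox, Fintype.mem_piFinset, Finset.mem_Icc]
  refine forall_congr' fun j => ?_
  rw [← abs_le, Int.le_floor, Int.cast_abs]

lemma card_intBox_le {k : ℕ} {Q : ℝ} (hQ : 1 ≤ Q) : ((intBox k Q).card : ℝ) ≤ (3 * Q) ^ k := by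
  have h0 : 0 ≤ ⌊Q⌋ := Int.floor_nonneg.2 (by linarith)
  rw [intBox, Fintype.card_piFinset]
  simp only [Int.card_Icc, Finset.prod_const, Finset.card_univ, Fintype.card_fin, Nat.cast_pow]
  refine pow_le_pow_left₀ (Nat.cast_nonneg _) ?_ k
  have h1 : (((⌊Q⌋ + 1 - -⌊Q⌋).toNat : ℤ) : ℝ) = ((⌊Q⌋ + 1 - -⌊Q⌋ : ℤ) : ℝ) := by
    rw [Int.toNat_of_nonneg (by linarith)]
  rw [Int.cast_natCast] at h1
  rw [h1]
  push_cast
  linarith [Int.floor_le Q]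

/-- A finite union bound with a uniform bound on the real scale. -/
lemma measure_biUnion_le_ofReal {α ι : Type*} [MeasurableSpace α] (μ : Measure α)
    (F : Finset ι) (E : ι → Set α) {N b : ℝ} (hF : (F.card : ℝ) ≤ N) (hb : 0 ≤ b)
    (hE : ∀ i ∈ F, μ (E i) ≤ ENNReal.ofReal b) :
    μ (⋃ i ∈ F, E i) ≤ ENNReal.ofReal (N * b) := by
  refine (measure_biUnion_finset_le _ _).trans ((Finset.sum_le_card_nsmul F _ _ hE).trans ?_)
  rw [← ENNReal.ofReal_nsmul, nsmul_eq_mul]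
  exact ENNReal.ofReal_le_ofReal (mul_le_mul_of_nonneg_right hF hb)

/-- Contribution of the integer points for which `A q + p` has a large linear part. -/
lemma volume_large_le {s m : ℕ} (A : Matrix (Fin (s + 1)) (Fin m) ℝ) {M δ Q η : ℝ} (hM : 1 ≤ M)
    (hδ : 0 < δ) (hQ : 1 ≤ Q) (hη : 0 ≤ η) (hη1 : η ≤ 1) :
    volume {x ∈ cube s M | ∃ (q : Fin m → ℤ) (p : Fin (s + 1) → ℤ),
        (∀ j, |(q j : ℝ)| ≤ Q) ∧ (∀ i : Fin s, |(p i.succ : ℝ)| ≤ Q) ∧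
        (∃ i : Fin s, δ ≤ |intCombo A q p i.succ|) ∧ |affForm (intCombo A q p) x| < η}
      ≤ ENNReal.ofReal ((3 * Q) ^ (s + m) * ((2 * M) ^ s * (4 * s * M + 6 / δ) * η)) := by
  classical
  set F := (intBox m Q ×ˢ intBox s Q).filter fun a =>
    ∃ i : Fin s, δ ≤ |intCombo A a.1 (Fin.cons 0 a.2) i.succ| with hF
  have hcard : (F.card : ℝ) ≤ (3 * Q) ^ (s + m) := by
    refine (Nat.cast_le.2 (Finset.card_filter_le _ _)).trans ?_
    rw [Finset.card_product, Nat.cast_mul, pow_add, mul_comm]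
    exact mul_le_mul (card_intBox_le hQ) (card_intBox_le hQ) (by positivity) (by positivity)
  refine (measure_mono ?_).trans (measure_biUnion_le_ofReal volume F (fun a =>
    {x ∈ cube s M | ∃ k : ℤ, |affForm (intCombo A a.1 (Fin.cons 0 a.2)) x + k| < η})
    hcard (by positivity) fun a ha =>
      volume_cube_near_int_le hM _ hδ (Finset.mem_filter.1 ha).2 hη hη1)
  rintro x ⟨hx, q, p, hq, hp, hi, hlt⟩
  simp only [Set.mem_iUnion]
  refine ⟨(q, fun i => p i.succ), ?_, hx, p 0, ?_⟩
  · rw [hF, Finset.mem_filter, Finset.mem_product, mem_intBox, mem_intBox]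
    exact ⟨⟨hq, hp⟩, by simpa [intCombo] using hi⟩
  · rw [affForm_eq] at hlt ⊢
    convert hlt using 2
    simp only [intCombo, Fin.cons_zero, Fin.cons_succ, Int.cast_zero]
    ring

/-- The integer vector closest to `-A q`. -/
noncomputable def nearestInt {k l : ℕ} (A : Matrix (Fin k) (Fin l) ℝ) (q : Fin l → ℤ) :
    Fin k → ℤ :=
  fun i => -round (∑ j, A i j * (q j : ℝ))

lemma eq_nearestInt {k l : ℕ} (A : Matrix (Fin k) (Fin l) ℝ) (q : Fin l → ℤ) (p : Fin k → ℤ)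
    (h : ∀ i, |intCombo A q p i| < 1 / 2) : p = nearestInt A q := by
  funext i
  have h1 := abs_sub_round (∑ j, A i j * (q j : ℝ))
  have h2 := h i
  have h3 : |((p i + round (∑ j, A i j * (q j : ℝ)) : ℤ) : ℝ)| < 1 := by
    simp only [intCombo] at h2
    push_cast
    rw [abs_lt] at *
    rw [abs_le] at h1
    constructor <;> linarith
  have := int_eq_zero_of_abs_cast_lt_one h3
  simp only [nearestInt]
  linarith

/-- Contribution of the integer points for which `A q + p` is not extremely small. -/
lemma volume_medium_le {s m : ℕ} (A : Matrix (Fin (s + 1)) (Fin m) ℝ) {M ρ Q η : ℝ} (hM : 1 ≤ M)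
    (hρ : 0 < ρ) (hQ : 1 ≤ Q) (hη : 0 ≤ η) :
    volume {x ∈ cube s M | ∃ q : Fin m → ℤ, (∀ j, |(q j : ℝ)| ≤ Q) ∧
        (∃ i, ρ ≤ |intCombo A q (nearestInt A q) i|) ∧
        |affForm (intCombo A q (nearestInt A q)) x| < η}
      ≤ ENNReal.ofReal ((3 * Q) ^ m * ((2 * M) ^ s * (4 * (s + 1) * M) * (η / ρ))) := by
  classical
  set F := (intBox m Q).filter fun q => ∃ i, ρ ≤ |intCombo A q (nearestInt A q) i| with hF
  have hcard : (F.card : ℝ) ≤ (3 * Q) ^ m :=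
    (Nat.cast_le.2 (Finset.card_filter_le _ _)).trans (card_intBox_le hQ)
  refine (measure_mono ?_).trans (measure_biUnion_le_ofReal volume F (fun q =>
    {x ∈ cube s M | |affForm (intCombo A q (nearestInt A q)) x| < η})
    hcard (by positivity) fun q hq => ?_)
  · rintro x ⟨hx, q, hq, hi, hlt⟩
    simp only [Set.mem_iUnion]
    exact ⟨q, Finset.mem_filter.2 ⟨mem_intBox.2 hq, hi⟩, hx, hlt⟩
  · obtain ⟨i, hi⟩ := (Finset.mem_filter.1 hq).2
    exact volume_cube_slab_le_of_le hM _ hρ hi hη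

/-- Among proportional vectors, the smallest one defines the widest slab. -/
lemma abs_affForm_le_of_parallel {s : ℕ} {w w' : Fin (s + 1) → ℝ} (hw : w ≠ 0)
    (hle : ‖w‖ ≤ ‖w'‖) (hpar : ∀ i j, w i * w' j = w j * w' i) (x : Fin s → ℝ) :
    |affForm w x| ≤ |affForm w' x| := by
  have hpos : 0 < ‖w‖ := norm_pos_iff.2 hw
  obtain ⟨k, hk⟩ := Finite.exists_max fun i => ‖w' i‖
  have hk' : ‖w'‖ = |w' k| :=
    le_antisymm ((pi_norm_le_iff_of_nonneg (norm_nonneg _)).2 hk) (norm_le_pi_norm w' k)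
  have hform : w' k * affForm w x = w k * affForm w' x := by
    simp only [affForm, Finset.mul_sum]
    refine Finset.sum_congr rfl fun i _ => ?_
    linear_combination (Fin.cons 1 x : Fin (s + 1) → ℝ) i * hpar i k
  have habs : |w' k| * |affForm w x| = |w k| * |affForm w' x| := by
    rw [← abs_mul, ← abs_mul, hform]
  have h1 : |w k| ≤ |w' k| := hk' ▸ (norm_le_pi_norm w k).trans hle
  have h2 : 0 < |w' k| := hk' ▸ hpos.trans_le hle
  refine le_of_mul_le_mul_left ?_ h2
  rw [habs]
  exact mul_le_mul_of_nonneg_right h1 (abs_nonneg _)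

/-- Contribution of the integer points for which `A q + p` is extremely small. -/
lemma volume_small_le {s m : ℕ} (A : Matrix (Fin (s + 1)) (Fin m) ℝ) {M δ Q ρ η : ℝ} (hM : 1 ≤ M)
    (hA : SmallParallel A δ) (hQ : 1 ≤ Q) (hρ : 0 < ρ)
    (hgood : ∀ q : Fin m → ℤ, q ≠ 0 → (∀ j, |(q j : ℝ)| ≤ Q) → ∀ p,
      ∃ i, ρ ≤ |intCombo A q p i|) (hη : 0 ≤ η) :
    volume {x ∈ cube s M | ∃ q : Fin m → ℤ, q ≠ 0 ∧ (∀ j, |(q j : ℝ)| ≤ Q) ∧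
        (∀ i, |intCombo A q (nearestInt A q) i| < δ / Q) ∧
        |affForm (intCombo A q (nearestInt A q)) x| < η}
      ≤ ENNReal.ofReal ((2 * M) ^ s * (4 * (s + 1) * M) * (η / ρ)) := by
  classical
  set F := (intBox m Q).filter fun q =>
    q ≠ 0 ∧ ∀ i, |intCombo A q (nearestInt A q) i| < δ / Q with hF
  have hmem : ∀ q, q ∈ F ↔ (∀ j, |(q j : ℝ)| ≤ Q) ∧ q ≠ 0 ∧
      ∀ i, |intCombo A q (nearestInt A q) i| < δ / Q := fun q => by
    rw [hF, Finset.mem_filter, mem_intBox]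
  rcases F.eq_empty_or_nonempty with hemp | hne
  · refine (measure_mono_null ?_ measure_empty).trans_le zero_le
    rintro x ⟨-, q, hq0, hq, hw, -⟩
    exact absurd ((hmem q).2 ⟨hq, hq0, hw⟩) (hemp ▸ Finset.notMem_empty q)
  · obtain ⟨q₁, hq₁, hmin⟩ := Finset.exists_min_image F
      (fun q => ‖intCombo A q (nearestInt A q)‖) hne
    obtain ⟨hQ₁, h0₁, hw₁⟩ := (hmem q₁).1 hq₁
    obtain ⟨i, hi⟩ := hgood q₁ h0₁ hQ₁ (nearestInt A q₁)
    refine (measure_mono ?_).trans (volume_cube_slab_le_of_le hM _ hρ hi hη)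
    rintro x ⟨hx, q, hq0, hq, hw, hlt⟩
    refine ⟨hx, (abs_affForm_le_of_parallel ?_ (hmin q ((hmem q).2 ⟨hq, hq0, hw⟩))
      (hA Q hQ _ _ _ _ hQ₁ hq hw₁ hw) x).trans_lt hlt⟩
    intro h0
    rw [h0, Pi.zero_apply, abs_zero] at hi
    linarith

/-- At a scale where `A` is badly approximable, few points of `𝓛_A` are well approximable. -/
lemma volume_affSolvable_le {s m : ℕ} (hs : 1 ≤ s) (A : Matrix (Fin (s + 1)) (Fin m) ℝ)
    {δ : ℝ} (hδ : 0 < δ) (hA : SmallParallel A δ) {M : ℝ} (hM : 1 ≤ M) {c : ℝ} (hc : 0 < c) :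
    ∃ K : ℝ, ∀ Q : ℝ, 1 ≤ Q →
      (∀ q : Fin m → ℤ, q ≠ 0 → (∀ j, |(q j : ℝ)| ≤ Q) → ∀ p,
        ∃ i, c / Q ^ (s + m) ≤ |intCombo A q p i|) →
      ∀ ε : ℝ, 0 < ε → ε ≤ 1 / 4 →
        volume {x ∈ cube s M | AffSolvable A Q (ε / Q ^ (s + m)) x} ≤ ENNReal.ofReal (K * ε) := by
  have hs' : (1 : ℝ) ≤ s := by exact_mod_cast hs
  set δ₀ : ℝ := 1 / (4 * s * M) with hδ₀
  have hδ₀0 : 0 < δ₀ := by positivity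
  have hδ₀1 : s * (M * δ₀) = 1 / 4 := by rw [hδ₀]; field_simp
  have hδ₀2 : δ₀ < 1 / 2 := by
    have : 1 ≤ s * M := one_le_mul_of_one_le_of_one_le hs' hM
    nlinarith
  set K₁ : ℝ := (2 * M) ^ s * (4 * s * M + 6 / δ₀) with hK₁
  set K₂ : ℝ := (2 * M) ^ s * (4 * (s + 1) * M) with hK₂
  have hK₁0 : 0 ≤ K₁ := by positivity
  have hK₂0 : 0 ≤ K₂ := by positivity
  refine ⟨3 ^ (s + m) * K₁ + (3 ^ m * (K₂ / δ) + K₂ / c), fun Q hQ hgood ε hε hε4 => ?_⟩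
  have hQ0 : 0 < Q := by linarith
  have hQn : 1 ≤ Q ^ (s + m) := one_le_pow₀ hQ
  set η : ℝ := ε / Q ^ (s + m) with hη
  have hη0 : 0 ≤ η := by positivity
  have hη4 : η ≤ 1 / 4 := (div_le_self hε.le hQn).trans hε4
  have h₁ := volume_large_le A hM hδ₀0 hQ hη0 (by linarith)
  have h₂ := volume_medium_le A hM (div_pos hδ hQ0) hQ hη0
  have h₃ := volume_small_le A hM hA hQ (by positivity) hgood hη0
  have hb₁ : (3 * Q) ^ (s + m) * (K₁ * η) = 3 ^ (s + m) * K₁ * ε := by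
    rw [hη, mul_pow]
    field_simp
  have hb₂ : (3 * Q) ^ m * (K₂ * (η / (δ / Q))) ≤ 3 ^ m * (K₂ / δ) * ε := by
    have hle : Q ^ m * Q ≤ Q ^ (s + m) := by
      rw [← pow_succ]
      exact pow_le_pow_right₀ hQ (by omega)
    calc (3 * Q) ^ m * (K₂ * (η / (δ / Q)))
        = 3 ^ m * (K₂ / δ) * ε * (Q ^ m * Q / Q ^ (s + m)) := by
          rw [hη, mul_pow]
          field_simp
      _ ≤ _ := mul_le_of_le_one_right (by positivity) ((div_le_one (by positivity)).2 hle)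
  have hb₃ : K₂ * (η / (c / Q ^ (s + m))) = K₂ / c * ε := by
    rw [hη]
    field_simp
  rw [hb₁] at h₁
  replace h₂ := h₂.trans (ENNReal.ofReal_le_ofReal hb₂)
  rw [hb₃] at h₃
  rw [add_mul, add_mul, ENNReal.ofReal_add (by positivity) (by positivity),
    ENNReal.ofReal_add (by positivity) (by positivity)]
  refine le_trans (measure_mono ?_) ((measure_union_le _ _).trans
    (add_le_add h₁ ((measure_union_le _ _).trans (add_le_add h₂ h₃))))
  rintro x ⟨hx, q, p, hne, hlt, hq, hp⟩
  by_cases hbig : ∃ i : Fin s, δ₀ ≤ |intCombo A q p i.succ|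
  · exact Or.inl ⟨hx, q, p, hq, hp, hbig, hlt⟩
  push Not at hbig
  have hhalf : ∀ i, |intCombo A q p i| < 1 / 2 := by
    refine Fin.cases ?_ fun i => (hbig i).trans hδ₀2
    have h1 := abs_sum_mul_le_of_mem_cube hx (by linarith)
      (a := fun i => intCombo A q p i.succ) fun i => (hbig i).le
    rw [affForm_eq] at hlt
    rw [abs_lt] at *
    rw [abs_le] at h1
    constructor <;> linarith
  obtain rfl := eq_nearestInt A q p hhalf
  have hq0 : q ≠ 0 := by
    rintro rfl
    rcases hne with hne | ⟨i, hi⟩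
    · exact hne rfl
    · simp [nearestInt] at hi
  refine Or.inr ?_
  by_cases hmed : ∃ i, δ / Q ≤ |intCombo A q (nearestInt A q) i|
  · exact Or.inl ⟨hx, q, hq, hmed, hlt⟩
  · push Not at hmed
    exact Or.inr ⟨hx, q, hq0, hq, hmed, hlt⟩

/-- If `A` is not `n`-singular and small values of `A q + p` are proportional, then almost no
point of `𝓛_A` is singular. -/
lemma ae_not_isSingularVec_affVec {s m : ℕ} (hs : 1 ≤ s) (A : Matrix (Fin (s + 1)) (Fin m) ℝ)
    {δ : ℝ} (hδ : 0 < δ) (hA : SmallParallel A δ)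
    (hns : ¬ IsMatSingular A ((s + m : ℕ) : ℝ)) :
    ∀ᵐ x ∂(volume : Measure (Fin s → ℝ)), ¬ IsSingularVec (affVec A x) := by
  simp only [IsMatSingular, Real.rpow_natCast] at hns
  push Not at hns
  obtain ⟨c, hc, hns⟩ := hns
  choose! R hR hgood using fun k : ℕ => hns ((k : ℝ) + 1) (by positivity)
  have hR1 : ∀ k, 1 ≤ R k := fun k => by
    have := hR k
    have : (0 : ℝ) ≤ k := Nat.cast_nonneg k
    linarith
  have hgood' : ∀ k, ∀ q : Fin m → ℤ, q ≠ 0 → (∀ j, |(q j : ℝ)| ≤ R k) → ∀ p,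
      ∃ i, c / R k ^ (s + m) ≤ |intCombo A q p i| := fun k q hq hqR p => by
    by_contra! h
    obtain ⟨j, hj⟩ := hgood k q hq p h
    exact absurd (hqR j) (not_le.2 hj)
  have hnull : ∀ N : ℕ, volume {x ∈ cube s ((N : ℝ) + 1) | IsSingularVec (affVec A x)} = 0 := by
    intro N
    obtain ⟨K, hK⟩ := volume_affSolvable_le hs A hδ hA (M := (N : ℝ) + 1) (by simp) hc
    have hbound : ∀ ε : ℝ, 0 < ε → ε ≤ 1 / 4 →
        volume {x ∈ cube s ((N : ℝ) + 1) | IsSingularVec (affVec A x)}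
          ≤ ENNReal.ofReal (K * ε) := fun ε hε hε4 => by
      set E : ℕ → Set (Fin s → ℝ) := fun k =>
        {x ∈ cube s ((N : ℝ) + 1) | AffSolvable A (R k) (ε / R k ^ (s + m)) x} with hE
      have hmono : Monotone fun j => ⋂ k ≥ j, E k := fun a b hab =>
        Set.biInter_subset_biInter_left fun k hk => le_trans hab hk
      have hsub : {x ∈ cube s ((N : ℝ) + 1) | IsSingularVec (affVec A x)}
          ⊆ ⋃ j, ⋂ k ≥ j, E k := by
        rintro x ⟨hx, hsing⟩
        obtain ⟨Q₀, -, h⟩ := (isSingularVec_affVec_iff A x).1 hsing ε hε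
        obtain ⟨j, hj⟩ := exists_nat_ge Q₀
        simp only [Set.mem_iUnion, Set.mem_iInter]
        refine ⟨j, fun k hk => ⟨hx, h _ ?_⟩⟩
        have : (j : ℝ) ≤ k := by exact_mod_cast hk
        linarith [hR k]
      refine (measure_mono hsub).trans ?_
      rw [hmono.measure_iUnion]
      refine iSup_le fun j => (measure_mono (Set.biInter_subset_of_mem (le_refl j))).trans ?_
      exact hK (R j) (hR1 j) (hgood' j) ε hε hε4
    have hlim : Tendsto (fun ε : ℝ => ENNReal.ofReal (K * ε)) (nhdsWithin 0 (Set.Ioi 0))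
        (nhds 0) := by
      have : Tendsto (fun ε : ℝ => ENNReal.ofReal (K * ε)) (nhds 0)
          (nhds (ENNReal.ofReal (K * 0))) :=
        (ENNReal.continuous_ofReal.comp (continuous_const.mul continuous_id)).tendsto 0
      rw [mul_zero, ENNReal.ofReal_zero] at this
      exact this.mono_left nhdsWithin_le_nhds
    refine le_antisymm (ge_of_tendsto hlim ?_) zero_le
    filter_upwards [Ioc_mem_nhdsGT (show (0 : ℝ) < 1 / 4 by norm_num)] with ε hε
    exact hbound ε hε.1 hε.2
  rw [ae_iff]
  refine measure_mono_null ?_ (measure_iUnion_null hnull)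
  intro x hx
  obtain ⟨N, hN⟩ := exists_nat_ge ‖x‖
  simp only [Set.mem_iUnion]
  refine ⟨N, ?_, by simpa using hx⟩
  have h : ∀ i, |x i| ≤ (N : ℝ) + 1 := fun i => (norm_le_pi_norm x i).trans (by linarith)
  exact ⟨fun i => (abs_le.1 (h i)).1, fun i => (abs_le.1 (h i)).2⟩

/-- Theorem: writing `n = s + m` with `m = n - s ≥ 1`, if all columns (resp. all rows) of `A`
are rational multiples of a single vector, then `A` is not `n`-singular iff Lebesgue-a.e.
point of `𝓛_A` is not singular. -/
theorem stmt_2 (s m : ℕ) (hm : 1 ≤ m) (A : Matrix (Fin (s+1)) (Fin m) ℝ)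
    (hcond : (∃ v : Fin (s+1) → ℝ, ∃ r : Fin m → ℚ, ∀ i l, A i l = (r l : ℝ) * v i) ∨
             (∃ u : Fin m → ℝ, ∃ r : Fin (s+1) → ℚ, ∀ i l, A i l = (r i : ℝ) * u l)) :
    ¬ IsMatSingular A ((s + m : ℕ) : ℝ) ↔
      ∀ᵐ x ∂(volume : Measure (Fin s → ℝ)), ¬ IsSingularVec (affVec A x) := by
  constructor
  · intro hns
    obtain ⟨δ, hδ, hpar⟩ : ∃ δ : ℝ, 0 < δ ∧ SmallParallel A δ := by
      rcases hcond with ⟨v, r, h⟩ | ⟨u, r, h⟩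
      · exact smallParallel_of_columns A v r h
      · exact smallParallel_of_rows A u r h
    rcases Nat.eq_zero_or_pos s with rfl | hs
    · exact Eventually.of_forall fun x hx => hns (isMatSingular_of_isSingularVec_affVec A x hx)
    · exact ae_not_isSingularVec_affVec hs A hδ hpar hns
  · intro hae hsing
    obtain ⟨x, hx⟩ := hae.exists
    exact hx (isSingularVec_affVec_of_isMatSingular A hsing x)
end
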